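/- Assume g : ℝⁿ → ℝ is continuous and there are constants S > 0 and c ∈ ℝ such that g(x) = c whenever |x| ≥ S. Then there exists a weak solution u of the level-set flow equation u_t = F(γ_{Du} D²u γ_{Du}) on ℝⁿ × [0, ∞) with initial data u(x, 0) = g(x) for all x ∈ ℝⁿ, and there exist constants R > 0 and c' ∈ ℝ such that u(x, t) = c' whenever |x| + t ≥ R. -/

import Mathlib

noncomputable section
open scoped Classical
open Matrix Set Filter

variable {n : ℕ}

/-- Squared Euclidean norm of a vector in `ℝⁿ`. -/
def sqNorm (p : Fin n → ℝ) : ℝ := ∑ i, p i ^ 2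

/-- Euclidean norm of a vector in `ℝⁿ`. -/
def eucNorm (p : Fin n → ℝ) : ℝ := Real.sqrt (sqNorm p)

/-- `γ_p = I − p pᵀ/|p|²` for `p ≠ 0`. -/
def gammaP (p : Fin n → ℝ) : Matrix (Fin n) (Fin n) ℝ :=
  1 - (sqNorm p)⁻¹ • Matrix.vecMulVec p p

/-- `γ_η = I − η ηᵀ`. -/
def gammaE (η : Fin n → ℝ) : Matrix (Fin n) (Fin n) ℝ :=
  1 - Matrix.vecMulVec η η

/-- `γ M γ`, i.e. the matrix with entries `γ^{ik} M_{kl} γ^{lj}`. -/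
def conjM (g M : Matrix (Fin n) (Fin n) ℝ) : Matrix (Fin n) (Fin n) ℝ := g * M * g

/-- `F(A) = f(κ(A))` where `κ(A)` is the eigenvalue vector of the symmetric matrix `A`
(junk value `0` if `A` is not symmetric). -/
def Fof (f : (Fin n → ℝ) → ℝ) (A : Matrix (Fin n) (Fin n) ℝ) : ℝ :=
  if h : A.IsHermitian then f h.eigenvalues else 0

/-- The eigenvalue vector of `A` lies in `K`. -/
def eigIn (K : Set (Fin n → ℝ)) (A : Matrix (Fin n) (Fin n) ℝ) : Prop :=
  ∃ h : A.IsHermitian, h.eigenvalues ∈ K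

/-- Gradient of a function on `ℝⁿ`. -/
def gradv (ψ : (Fin n → ℝ) → ℝ) (x : Fin n → ℝ) : Fin n → ℝ := fun i =>
  fderiv ℝ ψ x (Pi.single i 1)

/-- Hessian matrix of a function on `ℝⁿ`. -/
def hessv (ψ : (Fin n → ℝ) → ℝ) (x : Fin n → ℝ) : Matrix (Fin n) (Fin n) ℝ :=
  Matrix.of fun i j => fderiv ℝ (fun y => fderiv ℝ ψ y (Pi.single j 1)) x (Pi.single i 1)

/-- `K ⊂ ℝⁿ` is an open symmetric convex cone whose closure strictly contains the closed
positive cone. -/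
def GoodCone (K : Set (Fin n → ℝ)) : Prop :=
  IsOpen K ∧ Convex ℝ K ∧ (∀ c : ℝ, 0 < c → ∀ κ ∈ K, c • κ ∈ K) ∧
  (∀ σ : Equiv.Perm (Fin n), ∀ κ ∈ K, (κ ∘ σ) ∈ K) ∧
  {κ : Fin n → ℝ | ∀ i, 0 ≤ κ i} ⊆ closure K ∧
  {κ : Fin n → ℝ | ∀ i, 0 ≤ κ i} ≠ closure K

/-- The structure conditions on the curvature function `f` : smooth and symmetric on `K`,
strictly increasing in each variable, concave, positive in `K`, vanishing on `∂K`,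
normalized, and positively homogeneous of degree one. -/
def GoodF (K : Set (Fin n → ℝ)) (f : (Fin n → ℝ) → ℝ) : Prop :=
  ContDiffOn ℝ (⊤ : ℕ∞) f K ∧
  (∀ σ : Equiv.Perm (Fin n), ∀ κ, f (κ ∘ σ) = f κ) ∧
  (∀ κ ∈ K, ∀ i, 0 < fderiv ℝ f κ (Pi.single i 1)) ∧
  ConcaveOn ℝ K f ∧
  (∀ κ ∈ K, 0 < f κ) ∧
  (∀ κ ∈ frontier K, f κ = 0) ∧
  f (fun _ => 1) = 1 ∧
  (∀ c : ℝ, 0 < c → ∀ κ ∈ K, f (c • κ) = c * f κ)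

/-- Spatial gradient `Dφ` of a function of `(x, t)`. -/
def spaceGrad (φ : (Fin n → ℝ) × ℝ → ℝ) (z : (Fin n → ℝ) × ℝ) : Fin n → ℝ :=
  gradv (fun x => φ (x, z.2)) z.1

/-- Spatial Hessian `D²φ` of a function of `(x, t)`. -/
def spaceHess (φ : (Fin n → ℝ) × ℝ → ℝ) (z : (Fin n → ℝ) × ℝ) : Matrix (Fin n) (Fin n) ℝ :=
  hessv (fun x => φ (x, z.2)) z.1

/-- Time derivative `φ_t` of a function of `(x, t)`. -/
def timeDeriv (φ : (Fin n → ℝ) × ℝ → ℝ) (z : (Fin n → ℝ) × ℝ) : ℝ :=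
  deriv (fun t => φ (z.1, t)) z.2

/-- `ℝⁿ × [0, ∞)`. -/
def HalfSpace (n : ℕ) : Set ((Fin n → ℝ) × ℝ) := {z | 0 ≤ z.2}

/-- A smooth function `φ` is admissible on an open set `D ⊆ ℝⁿ × (0, ∞)`. -/
def Admissible (K : Set (Fin n → ℝ)) (f : (Fin n → ℝ) → ℝ)
    (φ : (Fin n → ℝ) × ℝ → ℝ) (D : Set ((Fin n → ℝ) × ℝ)) : Prop :=
  ContDiff ℝ (⊤ : ℕ∞) φ ∧
  ∀ z ∈ D,
    (spaceGrad φ z ≠ 0 →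
      eigIn K (conjM (gammaP (spaceGrad φ z)) (spaceHess φ z)) ∧
      0 < Fof f (conjM (gammaP (spaceGrad φ z)) (spaceHess φ z))) ∧
    (spaceGrad φ z = 0 →
      ∃ η : Fin n → ℝ, eucNorm η ≤ 1 ∧
        eigIn K (conjM (gammaE η) (spaceHess φ z)) ∧
        0 < Fof f (conjM (gammaE η) (spaceHess φ z)))

/-- Weak subsolution of `u_t = F(γ_{Du} D²u γ_{Du})` on `ℝⁿ × [0, ∞)`:
`u ∈ C(ℝⁿ × [0,∞)) ∩ L^∞(ℝⁿ × [0,∞))` and the viscosity (test-function) inequalities hold. -/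
def WeakSub (K : Set (Fin n → ℝ)) (f : (Fin n → ℝ) → ℝ)
    (u : (Fin n → ℝ) × ℝ → ℝ) : Prop :=
  ContinuousOn u (HalfSpace n) ∧ (∃ M : ℝ, ∀ z ∈ HalfSpace n, |u z| ≤ M) ∧
  ∀ D : Set ((Fin n → ℝ) × ℝ), IsOpen D → D ⊆ {z | 0 < z.2} →
    ∀ φ, Admissible K f φ D → ∀ z₀ ∈ D, IsLocalMax (fun z => u z - φ z) z₀ →
      (spaceGrad φ z₀ ≠ 0 →
        timeDeriv φ z₀ ≤ Fof f (conjM (gammaP (spaceGrad φ z₀)) (spaceHess φ z₀))) ∧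
      (spaceGrad φ z₀ = 0 →
        ∃ η : Fin n → ℝ, eucNorm η ≤ 1 ∧
          timeDeriv φ z₀ ≤ Fof f (conjM (gammaE η) (spaceHess φ z₀)))

/-- Weak supersolution of `u_t = F(γ_{Du} D²u γ_{Du})` on `ℝⁿ × [0, ∞)`. -/
def WeakSuper (K : Set (Fin n → ℝ)) (f : (Fin n → ℝ) → ℝ)
    (u : (Fin n → ℝ) × ℝ → ℝ) : Prop :=
  ContinuousOn u (HalfSpace n) ∧ (∃ M : ℝ, ∀ z ∈ HalfSpace n, |u z| ≤ M) ∧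
  ∀ D : Set ((Fin n → ℝ) × ℝ), IsOpen D → D ⊆ {z | 0 < z.2} →
    ∀ φ, Admissible K f φ D → ∀ z₀ ∈ D, IsLocalMin (fun z => u z - φ z) z₀ →
      (spaceGrad φ z₀ ≠ 0 →
        Fof f (conjM (gammaP (spaceGrad φ z₀)) (spaceHess φ z₀)) ≤ timeDeriv φ z₀) ∧
      (spaceGrad φ z₀ = 0 →
        ∃ η : Fin n → ℝ, eucNorm η ≤ 1 ∧
          Fof f (conjM (gammaE η) (spaceHess φ z₀)) ≤ timeDeriv φ z₀)

/-- Weak solution: both a weak subsolution and a weak supersolution. -/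
def WeakSol (K : Set (Fin n → ℝ)) (f : (Fin n → ℝ) → ℝ)
    (u : (Fin n → ℝ) × ℝ → ℝ) : Prop :=
  WeakSub K f u ∧ WeakSuper K f u

/-!
The solution is built by Perron's method. The admissible directions at a point with gradient `p`
are `η = p / |p|`, or the whole unit ball when `p = 0`, so `γ_p` is always some `γ_η`, and the
equation becomes `τ ≤ F(γ_η M γ_η)` for some admissible `η`. To make this condition on a
jet `(τ, p, M)` closed one relaxes it: it is void for `τ ≤ 0`, and `γ_η M γ_η` only has to lie
in `K` after adding an arbitrarily small multiple of the identity. Perron's solution `u` is the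
supremum of all continuous functions on spacetime which are relaxed subsolutions everywhere, lie
below `g x - t` for `t ≤ 0` and below the cone `c + max 0 (B - |x| - t)` for `t ≥ 0`.

* The equation is invariant under translations, so the supremum inherits a modulus of continuity
  from the initial time, where barriers of the form `C t + A |x - x₀|²` control the competitors.
* The supremum is again a relaxed subsolution. Where a smooth function touching `u` from above is
  admissible, the relaxed condition returns the true inequality, since the eigenvalues
  of `γ_η M γ_η` are maximal for some direction `η`.
* If `u` fails to be a supersolution at a point below the cone, a bump pushes it up. At a contact
  point with the cone no smooth function touching `u` from below is admissible, because along each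
  spatial line the cone decreases in one direction, which makes `γ_η M γ_η` nonpositive.
* For large `|x| + t` the cone and the competitor `c - Q max (R - |x|² - 2 a t) 0 ²` are both
  equal to `c`; the latter is a relaxed subsolution if `0 < a ≤ f (1, …, 1, 0)`.
-/

open scoped MatrixOrder Topology

/-! ### Eigenvalues and the Loewner order -/

section Eigenvalues

variable {ι : Type*}

lemma isHermitian_of_le {A B : Matrix ι ι ℝ} (hA : A.IsHermitian) (hAB : A ≤ B) :
    B.IsHermitian := by
  simpa using (Matrix.le_iff.1 hAB).1.add hA

lemma isHermitian_add_smul_one [DecidableEq ι] {A : Matrix ι ι ℝ} (hA : A.IsHermitian) (ε : ℝ) :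
    (A + ε • 1).IsHermitian :=
  hA.add (by simp [IsHermitian])

lemma le_add_smul_one [Finite ι] [DecidableEq ι] (A : Matrix ι ι ℝ) {ε : ℝ} (hε : 0 ≤ ε) :
    A ≤ A + ε • 1 := by
  have := Fintype.ofFinite ι
  exact le_add_of_nonneg_right (smul_nonneg hε zero_le_one)

variable [Fintype ι]

lemma dotProduct_self_nonneg_real (x : ι → ℝ) : 0 ≤ x ⬝ᵥ x := by
  simpa using dotProduct_star_self_nonneg x

lemma dotProduct_self_pos_real {x : ι → ℝ} (hx : x ≠ 0) : 0 < x ⬝ᵥ x := by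
  simpa using dotProduct_star_self_pos_iff.2 hx

lemma sq_le_dotProduct_self (x : ι → ℝ) (i : ι) : x i ^ 2 ≤ x ⬝ᵥ x := by
  simp only [dotProduct, ← pow_two]
  exact Finset.single_le_sum (f := fun i => x i ^ 2) (fun _ _ => sq_nonneg _) (Finset.mem_univ i)

lemma dotProduct_mulVec_comm {A : Matrix ι ι ℝ} (hA : A.IsHermitian) (x y : ι → ℝ) :
    x ⬝ᵥ A *ᵥ y = y ⬝ᵥ A *ᵥ x := by
  have hT : Aᵀ = A := by simpa only [IsHermitian, conjTranspose_eq_transpose_of_trivial] using hA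
  rw [dotProduct_mulVec, ← mulVec_transpose, hT, dotProduct_comm]

lemma dotProduct_mulVec_le_of_le {A B : Matrix ι ι ℝ} (hAB : A ≤ B) (x : ι → ℝ) :
    x ⬝ᵥ A *ᵥ x ≤ x ⬝ᵥ B *ᵥ x := by
  have h := (Matrix.le_iff.1 hAB).dotProduct_mulVec_nonneg x
  rw [star_trivial, sub_mulVec, dotProduct_sub] at h
  exact sub_nonneg.1 h

lemma le_of_forall_dotProduct_mulVec_le {A B : Matrix ι ι ℝ} (hA : A.IsHermitian)
    (hB : B.IsHermitian) (h : ∀ x, x ⬝ᵥ A *ᵥ x ≤ x ⬝ᵥ B *ᵥ x) : A ≤ B := by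
  refine Matrix.le_iff.2 (.of_dotProduct_mulVec_nonneg (hB.sub hA) fun x => ?_)
  rw [star_trivial, sub_mulVec, dotProduct_sub]
  exact sub_nonneg.2 (h x)

/-- The position of the index `i` when the eigenvalues are listed in decreasing order. -/
def eigenvalueRank (i : ι) : Fin (Fintype.card ι) :=
  (Fintype.equivOfCardEq (Fintype.card_fin _)).symm i

lemma card_rank_lt (i : ι) :
    Fintype.card {j : ι | eigenvalueRank j < eigenvalueRank i} = (eigenvalueRank i : ℕ) := by
  refine (Fintype.card_congr ((Fintype.equivOfCardEq (Fintype.card_fin _)).symm.subtypeEquiv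
    (q := (· < eigenvalueRank i)) fun _ => Iff.rfl)).trans ?_
  rw [Fintype.card_subtype, ← Fin.card_Iio (eigenvalueRank i)]
  exact congrArg _ (by ext; simp)

lemma card_rank_gt (i : ι) : Fintype.card {j : ι | eigenvalueRank i < eigenvalueRank j} =
    Fintype.card ι - 1 - (eigenvalueRank i : ℕ) := by
  refine (Fintype.card_congr ((Fintype.equivOfCardEq (Fintype.card_fin _)).symm.subtypeEquiv
    (q := (eigenvalueRank i < ·)) fun _ => Iff.rfl)).trans ?_
  rw [Fintype.card_subtype, ← Fin.card_Ioi (eigenvalueRank i)]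
  exact congrArg _ (by ext; simp)

variable [DecidableEq ι]

lemma dotProduct_add_smul_one_mulVec (A : Matrix ι ι ℝ) (ε : ℝ) (x : ι → ℝ) :
    x ⬝ᵥ (A + ε • 1) *ᵥ x = x ⬝ᵥ A *ᵥ x + ε * (x ⬝ᵥ x) := by
  simp [add_mulVec, smul_mulVec, dotProduct_add]

lemma eigenvalues_le_of_rank_le {A : Matrix ι ι ℝ} (hA : A.IsHermitian) {i j : ι}
    (hij : eigenvalueRank i ≤ eigenvalueRank j) : hA.eigenvalues j ≤ hA.eigenvalues i :=
  hA.eigenvalues₀_antitone hij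

/-- The coordinates of a vector in the orthonormal eigenbasis of a symmetric matrix. -/
def eigenCoord {A : Matrix ι ι ℝ} (hA : A.IsHermitian) : (ι → ℝ) →ₗ[ℝ] (ι → ℝ) :=
  mulVecLin (star (hA.eigenvectorUnitary : Matrix ι ι ℝ))

lemma eigenCoord_eq_vecMul {A : Matrix ι ι ℝ} (hA : A.IsHermitian) (x : ι → ℝ) :
    eigenCoord hA x = x ᵥ* (hA.eigenvectorUnitary : Matrix ι ι ℝ) := by
  rw [eigenCoord, mulVecLin_apply, star_eq_conjTranspose, conjTranspose_eq_transpose_of_trivial,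
    mulVec_transpose]

lemma dotProduct_self_eq_sum_eigenCoord {A : Matrix ι ι ℝ} (hA : A.IsHermitian) (x : ι → ℝ) :
    x ⬝ᵥ x = ∑ j, eigenCoord hA x j ^ 2 := by
  have hU : (hA.eigenvectorUnitary : Matrix ι ι ℝ) *
      star (hA.eigenvectorUnitary : Matrix ι ι ℝ) = 1 :=
    Unitary.coe_mul_star_self _
  calc x ⬝ᵥ x = eigenCoord hA x ⬝ᵥ eigenCoord hA x := by
        conv_rhs => lhs; rw [eigenCoord_eq_vecMul]
        rw [eigenCoord, mulVecLin_apply, ← dotProduct_mulVec, mulVec_mulVec, hU, one_mulVec]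
    _ = ∑ j, eigenCoord hA x j ^ 2 := by simp only [dotProduct, pow_two]

lemma dotProduct_mulVec_eq_sum_eigenCoord {A : Matrix ι ι ℝ} (hA : A.IsHermitian) (x : ι → ℝ) :
    x ⬝ᵥ A *ᵥ x = ∑ j, hA.eigenvalues j * eigenCoord hA x j ^ 2 := by
  have hspec := hA.spectral_theorem
  rw [Unitary.conjStarAlgAut_apply] at hspec
  calc x ⬝ᵥ A *ᵥ x = eigenCoord hA x ⬝ᵥ diagonal hA.eigenvalues *ᵥ eigenCoord hA x := by
        conv_rhs => lhs; rw [eigenCoord_eq_vecMul]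
        rw [eigenCoord, mulVecLin_apply, ← dotProduct_mulVec, mulVec_mulVec, mulVec_mulVec]
        exact congrArg (fun N : Matrix ι ι ℝ => x ⬝ᵥ N *ᵥ x) hspec
    _ = ∑ j, hA.eigenvalues j * eigenCoord hA x j ^ 2 := by
        simp only [dotProduct, mulVec_diagonal]
        exact Finset.sum_congr rfl fun j _ => by ring

lemma dotProduct_mulVec_le_of_eigenCoord {A : Matrix ι ι ℝ} (hA : A.IsHermitian) {c : ℝ}
    {x : ι → ℝ} (h : ∀ j, eigenCoord hA x j = 0 ∨ hA.eigenvalues j ≤ c) :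
    x ⬝ᵥ A *ᵥ x ≤ c * (x ⬝ᵥ x) := by
  rw [dotProduct_mulVec_eq_sum_eigenCoord hA, dotProduct_self_eq_sum_eigenCoord hA, Finset.mul_sum]
  refine Finset.sum_le_sum fun j _ => ?_
  rcases h j with hj | hj
  · simp [hj]
  · exact mul_le_mul_of_nonneg_right hj (sq_nonneg _)

lemma le_dotProduct_mulVec_of_eigenCoord {A : Matrix ι ι ℝ} (hA : A.IsHermitian) {c : ℝ}
    {x : ι → ℝ} (h : ∀ j, eigenCoord hA x j = 0 ∨ c ≤ hA.eigenvalues j) :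
    c * (x ⬝ᵥ x) ≤ x ⬝ᵥ A *ᵥ x := by
  rw [dotProduct_mulVec_eq_sum_eigenCoord hA, dotProduct_self_eq_sum_eigenCoord hA, Finset.mul_sum]
  refine Finset.sum_le_sum fun j _ => ?_
  rcases h j with hj | hj
  · simp [hj]
  · exact mul_le_mul_of_nonneg_right hj (sq_nonneg _)

/-- The coordinates in the eigenbasis with index in `s`. -/
def eigenCoordOn {A : Matrix ι ι ℝ} (hA : A.IsHermitian) (s : Set ι) : (ι → ℝ) →ₗ[ℝ] (s → ℝ) :=
  LinearMap.funLeft ℝ ℝ (Subtype.val : s → ι) ∘ₗ eigenCoord hA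

lemma eigenCoord_eq_zero {A : Matrix ι ι ℝ} {hA : A.IsHermitian} {s : Set ι} {x : ι → ℝ}
    (hx : eigenCoordOn hA s x = 0) {j : ι} (hj : j ∈ s) : eigenCoord hA x j = 0 :=
  congrFun hx ⟨j, hj⟩

/-- The lower half of the Courant–Fischer principle. -/
lemma le_eigenvalues_of_lt_finrank {B : Matrix ι ι ℝ} (hB : B.IsHermitian) (i : ι)
    {V : Submodule ℝ (ι → ℝ)} {c : ℝ} (hV : (eigenvalueRank i : ℕ) < Module.finrank ℝ V)
    (h : ∀ y ∈ V, c * (y ⬝ᵥ y) ≤ y ⬝ᵥ B *ᵥ y) : c ≤ hB.eigenvalues i := by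
  have hker : LinearMap.ker
      (eigenCoordOn hB {j | eigenvalueRank j < eigenvalueRank i} ∘ₗ V.subtype) ≠ ⊥ := by
    apply LinearMap.ker_ne_bot_of_finrank_lt
    rwa [Module.finrank_fintype_fun_eq_card, card_rank_lt]
  obtain ⟨⟨y, hyV⟩, hy, hy0⟩ := Submodule.exists_mem_ne_zero_of_ne_bot hker
  have hle : y ⬝ᵥ B *ᵥ y ≤ hB.eigenvalues i * (y ⬝ᵥ y) :=
    dotProduct_mulVec_le_of_eigenCoord hB fun j =>
      (lt_or_ge (eigenvalueRank j) (eigenvalueRank i)).imp (eigenCoord_eq_zero hy ·)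
        (eigenvalues_le_of_rank_le hB)
  have hpos : 0 < y ⬝ᵥ y := dotProduct_self_pos_real fun h0 => hy0 (Subtype.ext h0)
  exact le_of_mul_le_mul_right ((h y hyV).trans hle) hpos

/-- The upper half of the Courant–Fischer principle, attained on the top eigenvectors. -/
lemma exists_lt_finrank_eigenvalues_le {A : Matrix ι ι ℝ} (hA : A.IsHermitian) (i : ι) :
    ∃ V : Submodule ℝ (ι → ℝ), (eigenvalueRank i : ℕ) < Module.finrank ℝ V ∧
      ∀ y ∈ V, hA.eigenvalues i * (y ⬝ᵥ y) ≤ y ⬝ᵥ A *ᵥ y := by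
  set L := eigenCoordOn hA {j | eigenvalueRank i < eigenvalueRank j}
  refine ⟨LinearMap.ker L, ?_, fun y hy => ?_⟩
  · have hrank := LinearMap.finrank_range_add_finrank_ker L
    have hrange := Submodule.finrank_le (LinearMap.range L)
    rw [Module.finrank_fintype_fun_eq_card] at hrank hrange
    rw [card_rank_gt] at hrange
    have := (eigenvalueRank i).2
    omega
  · exact le_dotProduct_mulVec_of_eigenCoord hA fun j =>
      (lt_or_ge (eigenvalueRank i) (eigenvalueRank j)).imp (eigenCoord_eq_zero hy ·)
        (eigenvalues_le_of_rank_le hA)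

lemma eigenvalues_le_add {A B : Matrix ι ι ℝ} (hA : A.IsHermitian) (hB : B.IsHermitian) {ε : ℝ}
    (h : A ≤ B + ε • 1) (i : ι) : hA.eigenvalues i ≤ hB.eigenvalues i + ε := by
  obtain ⟨V, hV, hAV⟩ := exists_lt_finrank_eigenvalues_le hA i
  refine sub_le_iff_le_add.1 (le_eigenvalues_of_lt_finrank hB i hV fun y hy => ?_)
  have hAB := dotProduct_mulVec_le_of_le h y
  rw [dotProduct_add_smul_one_mulVec] at hAB
  linarith [hAV y hy]

lemma eigenvalues_le {A B : Matrix ι ι ℝ} (hA : A.IsHermitian) (hB : B.IsHermitian)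
    (h : A ≤ B) (i : ι) : hA.eigenvalues i ≤ hB.eigenvalues i := by
  simpa using eigenvalues_le_add (ε := 0) hA hB (by simpa using h) i

lemma eigenvalues_add_smul_one {A : Matrix ι ι ℝ} (hA : A.IsHermitian) (ε : ℝ) :
    (isHermitian_add_smul_one hA ε).eigenvalues = fun i => hA.eigenvalues i + ε := by
  funext i
  have hle : A ≤ A + ε • 1 + (-ε) • 1 := by simp
  exact le_antisymm (eigenvalues_le_add _ hA le_rfl i)
    (by linarith [eigenvalues_le_add hA (isHermitian_add_smul_one hA ε) hle i])

lemma exists_eigenvector {A : Matrix ι ι ℝ} (hA : A.IsHermitian) (i : ι) :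
    ∃ x : ι → ℝ, x ⬝ᵥ x = 1 ∧ A *ᵥ x = hA.eigenvalues i • x := by
  refine ⟨hA.eigenvectorBasis i, ?_, hA.mulVec_eigenvectorBasis i⟩
  have hsq := EuclideanSpace.real_norm_sq_eq (hA.eigenvectorBasis i)
  rw [hA.eigenvectorBasis.orthonormal.1 i, one_pow] at hsq
  simpa only [dotProduct, ← pow_two] using hsq.symm

lemma eigenvalues_smul_one {C : ℝ} (hC : (C • 1 : Matrix ι ι ℝ).IsHermitian) :
    hC.eigenvalues = fun _ => C := by
  funext i
  obtain ⟨x, hx, hCx⟩ := exists_eigenvector hC i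
  have := congrArg (x ⬝ᵥ ·) hCx
  simp only [smul_mulVec, one_mulVec, dotProduct_smul, hx, smul_eq_mul, mul_one] at this
  exact this.symm

end Eigenvalues

/-! ### The cone and the curvature function -/

section Cone

variable {K : Set (Fin n → ℝ)} {f : (Fin n → ℝ) → ℝ}

/-- The conditions on a curvature function that drive the existence theorem: concave and positive
on `K`, vanishing on `∂K`, normalized, and positively homogeneous of degree one. -/
structure ConcaveCurvature (K : Set (Fin n → ℝ)) (f : (Fin n → ℝ) → ℝ) : Prop where
  concaveOn : ConcaveOn ℝ K f
  pos : ∀ κ ∈ K, 0 < f κ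
  eq_zero_of_mem_frontier : ∀ κ ∈ frontier K, f κ = 0
  map_one : f (fun _ => 1) = 1
  map_smul : ∀ c : ℝ, 0 < c → ∀ κ ∈ K, f (c • κ) = c * f κ

lemma GoodF.concaveCurvature (hf : GoodF K f) : ConcaveCurvature K f :=
  let ⟨_, _, _, concaveOn, pos, zero, one, smul⟩ := hf
  ⟨concaveOn, pos, zero, one, smul⟩

lemma GoodCone.isOpen (hK : GoodCone K) : IsOpen K := hK.1

lemma GoodCone.convex (hK : GoodCone K) : Convex ℝ K := hK.2.1

lemma GoodCone.smul_mem (hK : GoodCone K) {c : ℝ} (hc : 0 < c) {a : Fin n → ℝ} (ha : a ∈ K) :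
    c • a ∈ K :=
  hK.2.2.1 c hc a ha

lemma GoodCone.comp_perm_mem (hK : GoodCone K) (σ : Equiv.Perm (Fin n)) {a : Fin n → ℝ}
    (ha : a ∈ K) : a ∘ σ ∈ K :=
  hK.2.2.2.1 σ a ha

lemma GoodCone.mem_closure_of_nonneg (hK : GoodCone K) {a : Fin n → ℝ} (ha : ∀ i, 0 ≤ a i) :
    a ∈ closure K :=
  hK.2.2.2.2.1 ha

lemma GoodCone.nonempty (hK : GoodCone K) : K.Nonempty :=
  closure_nonempty_iff.1 ⟨0, hK.mem_closure_of_nonneg fun _ => le_rfl⟩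

lemma GoodCone.add_mem_of_mem_closure (hK : GoodCone K) {a b : Fin n → ℝ} (ha : a ∈ K)
    (hb : b ∈ closure K) : a + b ∈ K := by
  have hmid : (1 / 2 : ℝ) • a + (1 / 2 : ℝ) • b ∈ interior K :=
    hK.convex.openSegment_interior_closure_subset_interior (hK.isOpen.interior_eq.symm ▸ ha) hb
      ⟨1 / 2, 1 / 2, by norm_num, by norm_num, by norm_num, rfl⟩
  convert hK.smul_mem two_pos (interior_subset hmid) using 1
  module

lemma GoodCone.mono (hK : GoodCone K) {a b : Fin n → ℝ} (ha : a ∈ K) (hab : ∀ i, a i ≤ b i) :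
    b ∈ K := by
  simpa using hK.add_mem_of_mem_closure ha
    (hK.mem_closure_of_nonneg (a := b - a) fun i => sub_nonneg.2 (hab i))

lemma GoodCone.interior_closure (hK : GoodCone K) : interior (closure K) = K := by
  rw [hK.convex.interior_closure_eq_interior_of_nonempty_interior, hK.isOpen.interior_eq]
  rw [hK.isOpen.interior_eq]
  exact hK.nonempty

lemma GoodCone.mem_of_pos (hK : GoodCone K) {a : Fin n → ℝ} (ha : ∀ i, 0 < a i) : a ∈ K := by
  rw [← hK.interior_closure, mem_interior]
  refine ⟨univ.pi fun _ => Ioi 0, fun κ hκ => hK.mem_closure_of_nonneg fun i => ?_,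
    isOpen_set_pi finite_univ fun _ _ => isOpen_Ioi, fun i _ => ha i⟩
  exact (hκ i (mem_univ i)).le

lemma ConcaveCurvature.zero_notMem (hf : ConcaveCurvature K f) : (0 : Fin n → ℝ) ∉ K := by
  intro h
  have hpos := hf.pos 0 h
  have hdouble := hf.map_smul 2 two_pos 0 h
  rw [smul_zero] at hdouble
  linarith

lemma ConcaveCurvature.notMem_of_nonpos (hf : ConcaveCurvature K f) (hK : GoodCone K)
    {a : Fin n → ℝ} (ha : ∀ i, a i ≤ 0) : a ∉ K := fun h =>
  hf.zero_notMem (hK.mono h ha)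

lemma GoodCone.exists_neg_coord (hK : GoodCone K) (i : Fin n) : ∃ a ∈ K, a i < 0 := by
  obtain ⟨v, hv, j, hj⟩ : ∃ v ∈ closure K, ∃ j, v j < 0 := by
    by_contra! hnonneg
    exact hK.2.2.2.2.2 (Subset.antisymm hK.2.2.2.2.1 hnonneg)
  obtain ⟨w, hwj, hwK⟩ := mem_closure_iff.1 hv {w | w j < 0}
    (isOpen_lt (continuous_apply j) continuous_const) hj
  exact ⟨w ∘ Equiv.swap i j, hK.comp_perm_mem _ hwK, by simpa using hwj⟩

lemma GoodCone.one_sub_single_mem (hK : GoodCone K) (i : Fin n) :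
    ((fun _ => 1) - Pi.single i 1 : Fin n → ℝ) ∈ K := by
  obtain ⟨w, hw, hwi⟩ := hK.exists_neg_coord i
  obtain ⟨M, hM⟩ : ∃ M, ∀ k, w k ≤ M := (Set.finite_range w).bddAbove.imp fun _ h k => h ⟨k, rfl⟩
  have hM1 : 0 < max M 1 := lt_max_of_lt_right one_pos
  have hdom : max M 1 • ((fun _ => 1) - Pi.single i 1 : Fin n → ℝ) ∈ K := by
    refine hK.mono hw fun k => ?_
    rcases eq_or_ne k i with rfl | hk
    · simpa using hwi.le
    · simpa [hk] using Or.inl (hM k)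
  simpa [smul_smul, hM1.ne'] using hK.smul_mem (inv_pos.2 hM1) hdom

lemma ConcaveCurvature.two_le (hf : ConcaveCurvature K f) (hK : GoodCone K) : 2 ≤ n := by
  by_contra! hn
  have : Subsingleton (Fin n) := Fin.subsingleton_iff_le_one.2 (by omega)
  refine hf.zero_notMem ?_
  rcases isEmpty_or_nonempty (Fin n) with _ | ⟨⟨i⟩⟩
  · exact hK.mem_of_pos isEmptyElim
  · convert hK.one_sub_single_mem i
    ext k
    simp [Subsingleton.elim k i]

lemma ConcaveCurvature.add_le (hf : ConcaveCurvature K f) {a b : Fin n → ℝ} (ha : a ∈ K)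
    (hb : b ∈ K) : f a + f b ≤ f (a + b) := by
  have hhalf : (0 : ℝ) ≤ 1 / 2 := by norm_num
  have hconc := hf.concaveOn.2 ha hb hhalf hhalf (add_halves 1)
  have hdouble := hf.map_smul 2 two_pos _ (hf.concaveOn.1 ha hb hhalf hhalf (add_halves 1))
  rw [show (2 : ℝ) • ((1 / 2 : ℝ) • a + (1 / 2 : ℝ) • b) = a + b by module] at hdouble
  simp only [smul_eq_mul] at hconc
  linarith

lemma tendsto_add_const (a : Fin n → ℝ) :
    Tendsto (fun (ε : ℝ) i => a i + ε) (𝓝 0) (𝓝 a) :=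
  Continuous.tendsto' (by fun_prop) _ _ (by simp)

lemma ConcaveCurvature.tendsto_add_const (hf : ConcaveCurvature K f) (hK : GoodCone K)
    {a : Fin n → ℝ} (ha : a ∈ K) :
    Tendsto (fun ε : ℝ => f fun i => a i + ε) (𝓝 0) (𝓝 (f a)) :=
  ((hf.concaveOn.continuousOn hK.isOpen).continuousAt (hK.isOpen.mem_nhds ha)).tendsto.comp
    (_root_.tendsto_add_const a)

lemma ConcaveCurvature.mono (hf : ConcaveCurvature K f) (hK : GoodCone K) {a b : Fin n → ℝ}
    (ha : a ∈ K) (hab : ∀ i, a i ≤ b i) : f a ≤ f b := by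
  refine ge_of_tendsto
    ((hf.tendsto_add_const hK (hK.mono ha hab)).mono_left (nhdsWithin_le_nhds (s := Ioi 0))) ?_
  filter_upwards [self_mem_nhdsWithin] with ε (hε : 0 < ε)
  have hdiff : (fun i => b i - a i + ε) ∈ K :=
    hK.mem_of_pos fun i => add_pos_of_nonneg_of_pos (sub_nonneg.2 (hab i)) hε
  have hadd := hf.add_le ha hdiff
  rw [show (a + fun i => b i - a i + ε) = fun i => b i + ε by ext i; simp [add_sub_cancel,
    ← add_assoc]] at hadd
  linarith [hf.pos _ hdiff]

lemma GoodCone.const_mem (hK : GoodCone K) {C : ℝ} (hC : 0 < C) : (fun _ => C) ∈ K :=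
  hK.mem_of_pos fun _ => hC

lemma ConcaveCurvature.map_const (hf : ConcaveCurvature K f) (hK : GoodCone K) {C : ℝ}
    (hC : 0 < C) : f (fun _ => C) = C := by
  have h := hf.map_smul C hC _ (hK.const_mem one_pos)
  rw [hf.map_one] at h
  convert h using 1
  · congr 1; ext; simp
  · simp

end Cone

section Curvature

variable {K : Set (Fin n → ℝ)} {f : (Fin n → ℝ) → ℝ} {A B : Matrix (Fin n) (Fin n) ℝ}

lemma Fof_eq (hA : A.IsHermitian) : Fof f A = f hA.eigenvalues :=
  dif_pos hA

lemma eigIn_iff (hA : A.IsHermitian) : eigIn K A ↔ hA.eigenvalues ∈ K :=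
  ⟨fun ⟨_, h⟩ => h, fun h => ⟨hA, h⟩⟩

lemma eigIn.Fof_pos (h : eigIn K A) (hf : ConcaveCurvature K f) : 0 < Fof f A := by
  obtain ⟨hA, h⟩ := h
  rw [Fof_eq hA]
  exact hf.pos _ h

lemma eigIn.mono (h : eigIn K A) (hK : GoodCone K) (hAB : A ≤ B) : eigIn K B := by
  obtain ⟨hA, h⟩ := h
  have hB := isHermitian_of_le hA hAB
  exact (eigIn_iff hB).2 (hK.mono h (eigenvalues_le hA hB hAB))

lemma eigIn.Fof_mono (h : eigIn K A) (hf : ConcaveCurvature K f) (hK : GoodCone K) (hAB : A ≤ B) :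
    Fof f A ≤ Fof f B := by
  obtain ⟨hA, h⟩ := h
  have hB := isHermitian_of_le hA hAB
  rw [Fof_eq hA, Fof_eq hB]
  exact hf.mono hK h (eigenvalues_le hA hB hAB)

lemma eigIn.eventually_add_smul_one (h : eigIn K A) (hK : GoodCone K) :
    ∀ᶠ ε : ℝ in 𝓝 0, eigIn K (A + ε • 1) := by
  obtain ⟨hA, h⟩ := h
  simp_rw [eigIn_iff (isHermitian_add_smul_one hA _), eigenvalues_add_smul_one hA]
  exact tendsto_add_const _ (hK.isOpen.mem_nhds h)

lemma eigIn.tendsto_Fof_add_smul_one (h : eigIn K A) (hf : ConcaveCurvature K f)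
    (hK : GoodCone K) : Tendsto (fun ε : ℝ => Fof f (A + ε • 1)) (𝓝 0) (𝓝 (Fof f A)) := by
  obtain ⟨hA, h⟩ := h
  simp_rw [Fof_eq (isHermitian_add_smul_one hA _), Fof_eq hA, eigenvalues_add_smul_one hA]
  exact hf.tendsto_add_const hK h

lemma eigIn.le_Fof_of_forall_pos (h : eigIn K A) (hf : ConcaveCurvature K f) (hK : GoodCone K)
    {τ : ℝ} (hτ : ∀ ε : ℝ, 0 < ε → τ ≤ Fof f (A + ε • 1)) : τ ≤ Fof f A := by
  refine ge_of_tendsto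
    ((h.tendsto_Fof_add_smul_one hf hK).mono_left (nhdsWithin_le_nhds (s := Ioi 0))) ?_
  filter_upwards [self_mem_nhdsWithin] with ε hε using hτ ε hε

lemma isHermitian_smul_one (C : ℝ) : (C • 1 : Matrix (Fin n) (Fin n) ℝ).IsHermitian := by
  simp [IsHermitian]

lemma not_eigIn_of_nonpos (hf : ConcaveCurvature K f) (hK : GoodCone K) (hA : A ≤ 0) :
    ¬ eigIn K A := fun h => by
  have hzero := (eigIn_iff (isHermitian_smul_one 0)).1 (h.mono hK (by simpa using hA))
  rw [eigenvalues_smul_one] at hzero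
  exact hf.notMem_of_nonpos hK (fun _ => le_rfl) hzero

lemma Fof_smul_one (hf : ConcaveCurvature K f) (hK : GoodCone K) {C : ℝ} (hC : 0 < C) :
    Fof f (C • 1 : Matrix (Fin n) (Fin n) ℝ) = C := by
  rw [Fof_eq (isHermitian_smul_one C), eigenvalues_smul_one, hf.map_const hK hC]

lemma eigIn.Fof_le_of_le_smul_one (h : eigIn K A) (hf : ConcaveCurvature K f) (hK : GoodCone K)
    {C : ℝ} (hC : 0 < C) (hA : A ≤ C • 1) : Fof f A ≤ C :=
  (h.Fof_mono hf hK hA).trans_eq (Fof_smul_one hf hK hC)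

end Curvature

/-! ### The matrices `γ_η` -/

section Gamma

lemma sqNorm_eq_dotProduct (x : Fin n → ℝ) : sqNorm x = x ⬝ᵥ x := by
  simp [sqNorm, dotProduct, pow_two]

lemma eucNorm_le_one_iff (x : Fin n → ℝ) : eucNorm x ≤ 1 ↔ x ⬝ᵥ x ≤ 1 := by
  rw [eucNorm, sqNorm_eq_dotProduct, Real.sqrt_le_one]

lemma eucNorm_sq (x : Fin n → ℝ) : eucNorm x ^ 2 = x ⬝ᵥ x := by
  rw [eucNorm, sqNorm_eq_dotProduct, Real.sq_sqrt (dotProduct_self_nonneg_real x)]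

lemma eucNorm_pos {x : Fin n → ℝ} (hx : x ≠ 0) : 0 < eucNorm x := by
  rw [eucNorm, sqNorm_eq_dotProduct]
  exact Real.sqrt_pos.2 (dotProduct_self_pos_real hx)

lemma transpose_gammaE (η : Fin n → ℝ) : (gammaE η)ᵀ = gammaE η := by
  simp [gammaE, transpose_vecMulVec]

lemma isSelfAdjoint_gammaE (η : Fin n → ℝ) : IsSelfAdjoint (gammaE η) := by
  rw [isSelfAdjoint_iff, star_eq_conjTranspose, conjTranspose_eq_transpose_of_trivial,
    transpose_gammaE]

lemma gammaE_mulVec (η x : Fin n → ℝ) : gammaE η *ᵥ x = x - (η ⬝ᵥ x) • η := by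
  rw [gammaE, sub_mulVec, one_mulVec, vecMulVec_mulVec, op_smul_eq_smul]

lemma gammaE_mulVec_self {e : Fin n → ℝ} (he : e ⬝ᵥ e = 1) : gammaE e *ᵥ e = 0 := by
  rw [gammaE_mulVec, he, one_smul, sub_self]

lemma conjM_gammaE_zero (M : Matrix (Fin n) (Fin n) ℝ) : conjM (gammaE 0) M = M := by
  simp [conjM, gammaE]

lemma dotProduct_conjM_mulVec (η : Fin n → ℝ) (M : Matrix (Fin n) (Fin n) ℝ) (x : Fin n → ℝ) :
    x ⬝ᵥ conjM (gammaE η) M *ᵥ x = (gammaE η *ᵥ x) ⬝ᵥ M *ᵥ (gammaE η *ᵥ x) := by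
  rw [conjM, ← mulVec_mulVec, ← mulVec_mulVec, dotProduct_mulVec, ← mulVec_transpose,
    transpose_gammaE]

lemma isHermitian_conjM (η : Fin n → ℝ) {M : Matrix (Fin n) (Fin n) ℝ} (hM : M.IsHermitian) :
    (conjM (gammaE η) M).IsHermitian := by
  have := isHermitian_conjTranspose_mul_mul (gammaE η) hM
  rwa [conjTranspose_eq_transpose_of_trivial, transpose_gammaE] at this

lemma conjM_gammaE_mono (η : Fin n → ℝ) {M N : Matrix (Fin n) (Fin n) ℝ} (h : M ≤ N) :
    conjM (gammaE η) M ≤ conjM (gammaE η) N :=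
  (isSelfAdjoint_gammaE η).conjugate_le_conjugate h

lemma gammaE_dotProduct_self (η x : Fin n → ℝ) : (gammaE η *ᵥ x) ⬝ᵥ (gammaE η *ᵥ x) =
    x ⬝ᵥ x - (2 - η ⬝ᵥ η) * (η ⬝ᵥ x) ^ 2 := by
  rw [gammaE_mulVec]
  simp only [sub_dotProduct, dotProduct_sub, smul_dotProduct, dotProduct_smul, smul_eq_mul,
    dotProduct_comm x η]
  ring

lemma gammaE_dotProduct_self_le {η : Fin n → ℝ} (hη : η ⬝ᵥ η ≤ 1) (x : Fin n → ℝ) :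
    (gammaE η *ᵥ x) ⬝ᵥ (gammaE η *ᵥ x) ≤ x ⬝ᵥ x := by
  rw [gammaE_dotProduct_self]
  exact sub_le_self _ (mul_nonneg (by linarith) (sq_nonneg _))

lemma gammaP_eq_gammaE {p η : Fin n → ℝ} (hp : p ≠ 0) (hη : eucNorm p • η = p) :
    gammaP p = gammaE η := by
  have hpos := eucNorm_pos hp
  have hvec : vecMulVec p p = eucNorm p ^ 2 • vecMulVec η η := by
    conv_lhs => rw [← hη]
    rw [vecMulVec_smul, smul_vecMulVec, smul_smul, pow_two]
  rw [gammaP, gammaE, sqNorm_eq_dotProduct, ← eucNorm_sq, hvec, smul_smul,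
    inv_mul_cancel₀ (pow_pos hpos 2).ne', one_smul]

end Gamma

section OptimalDirection

variable {D B : Matrix (Fin n) (Fin n) ℝ} {η e : Fin n → ℝ} {lam : ℝ}

lemma eigenvalues_conjM_le_of_pos (hD : D.IsHermitian) (hB : B.IsHermitian) (hDB : D ≤ B)
    (hη : η ⬝ᵥ η ≤ 1) {i : Fin n} (hpos : 0 < (isHermitian_conjM η hD).eigenvalues i) :
    (isHermitian_conjM η hD).eigenvalues i ≤ hB.eigenvalues i := by
  obtain ⟨V, hV, hVD⟩ := exists_lt_finrank_eigenvalues_le (isHermitian_conjM η hD) i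
  set c := (isHermitian_conjM η hD).eigenvalues i
  simp only [dotProduct_conjM_mulVec] at hVD
  let T : V →ₗ[ℝ] (Fin n → ℝ) := mulVecLin (gammaE η) ∘ₗ V.subtype
  have hT : Function.Injective T := by
    refine LinearMap.ker_eq_bot.1 (LinearMap.ker_eq_bot'.2 fun x hx => ?_)
    by_contra hne
    have hle := hVD x x.2
    rw [show gammaE η *ᵥ (x : Fin n → ℝ) = 0 from hx, zero_dotProduct] at hle
    exact hle.not_gt (mul_pos hpos (dotProduct_self_pos_real (by simpa using hne)))
  refine le_eigenvalues_of_lt_finrank hB i (V := LinearMap.range T) ?_ ?_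
  · rwa [LinearMap.finrank_range_of_inj hT]
  · rintro _ ⟨x, rfl⟩
    exact ((mul_le_mul_of_nonneg_left (gammaE_dotProduct_self_le hη x) hpos.le).trans
      (hVD x x.2)).trans (dotProduct_mulVec_le_of_le hDB _)

lemma dotProduct_conjM_eigenvector (hD : D.IsHermitian) (he : e ⬝ᵥ e = 1)
    (hDe : D *ᵥ e = lam • e) (x : Fin n → ℝ) :
    x ⬝ᵥ conjM (gammaE e) D *ᵥ x = x ⬝ᵥ D *ᵥ x - lam * (e ⬝ᵥ x) ^ 2 := by
  have hex : e ⬝ᵥ D *ᵥ x = lam * (e ⬝ᵥ x) := by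
    rw [dotProduct_mulVec_comm hD, hDe, dotProduct_smul, dotProduct_comm x e, smul_eq_mul]
  rw [dotProduct_conjM_mulVec, gammaE_mulVec, mulVec_sub, mulVec_smul, hDe]
  simp only [sub_dotProduct, dotProduct_sub, smul_dotProduct, dotProduct_smul, smul_eq_mul,
    dotProduct_comm x e, he, hex]
  ring

lemma le_conjM_eigenvector (hD : D.IsHermitian) (he : e ⬝ᵥ e = 1) (hDe : D *ᵥ e = lam • e)
    (hlam : lam ≤ 0) : D ≤ conjM (gammaE e) D := by
  refine le_of_forall_dotProduct_mulVec_le hD (isHermitian_conjM e hD) fun x => ?_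
  rw [dotProduct_conjM_eigenvector hD he hDe]
  exact le_sub_self_iff _ |>.2 (mul_nonpos_of_nonpos_of_nonneg hlam (sq_nonneg _))

lemma le_dotProduct_conjM_of_mem_sup (hD : D.IsHermitian) (he : e ⬝ᵥ e = 1)
    (hDe : D *ᵥ e = lam • e) {c : ℝ} (hlam : lam ≤ c) (hc : c ≤ 0)
    {W : Submodule ℝ (Fin n → ℝ)} (hW : ∀ x ∈ W, c * (x ⬝ᵥ x) ≤ x ⬝ᵥ D *ᵥ x) {y : Fin n → ℝ}
    (hy : y ∈ W ⊔ Submodule.span ℝ {e}) : c * (y ⬝ᵥ y) ≤ y ⬝ᵥ conjM (gammaE e) D *ᵥ y := by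
  obtain ⟨x, hx, _, hr, rfl⟩ := Submodule.mem_sup.1 hy
  obtain ⟨r, rfl⟩ := Submodule.mem_span_singleton.1 hr
  have hγ : gammaE e *ᵥ (x + r • e) = gammaE e *ᵥ x := by
    rw [mulVec_add, mulVec_smul, gammaE_mulVec_self he, smul_zero, add_zero]
  have hnorm : (x + r • e) ⬝ᵥ (x + r • e) = x ⬝ᵥ x - (e ⬝ᵥ x) ^ 2 + (e ⬝ᵥ x + r) ^ 2 := by
    simp only [add_dotProduct, dotProduct_add, smul_dotProduct, dotProduct_smul, smul_eq_mul, he,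
      dotProduct_comm x e]
    ring
  rw [dotProduct_conjM_mulVec, hγ, ← dotProduct_conjM_mulVec,
    dotProduct_conjM_eigenvector hD he hDe, hnorm]
  have hWx := hW x hx
  nlinarith [mul_nonneg (neg_nonneg.2 hc) (sq_nonneg (e ⬝ᵥ x + r)),
    mul_nonneg (sub_nonneg.2 hlam) (sq_nonneg (e ⬝ᵥ x))]

lemma exists_orthogonal_submodule (V : Submodule ℝ (Fin n → ℝ)) (η : Fin n → ℝ) :
    ∃ W ≤ V, (∀ x ∈ W, η ⬝ᵥ x = 0) ∧ Module.finrank ℝ V ≤ Module.finrank ℝ W + 1 := by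
  let φ : V →ₗ[ℝ] ℝ := dotProductBilin ℝ ℝ η ∘ₗ V.subtype
  refine ⟨(LinearMap.ker φ).map V.subtype, Submodule.map_subtype_le _ _, ?_, ?_⟩
  · rintro _ ⟨x, hx, rfl⟩
    exact hx
  · have hrank := LinearMap.finrank_range_add_finrank_ker φ
    have hrange := Submodule.finrank_le (LinearMap.range φ)
    rw [Module.finrank_self] at hrange
    rw [Submodule.finrank_map_subtype_eq]
    omega

lemma eigenvalues_conjM_le_of_nonpos (hD : D.IsHermitian) (he : e ⬝ᵥ e = 1)
    (hDe : D *ᵥ e = lam • e) {i : Fin n} (hlam : lam < (isHermitian_conjM η hD).eigenvalues i)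
    (hc : (isHermitian_conjM η hD).eigenvalues i ≤ 0) :
    (isHermitian_conjM η hD).eigenvalues i ≤ (isHermitian_conjM e hD).eigenvalues i := by
  obtain ⟨V, hV, hVD⟩ := exists_lt_finrank_eigenvalues_le (isHermitian_conjM η hD) i
  set c := (isHermitian_conjM η hD).eigenvalues i
  obtain ⟨W, hWV, hWη, hW⟩ := exists_orthogonal_submodule V η
  have hWD : ∀ x ∈ W, c * (x ⬝ᵥ x) ≤ x ⬝ᵥ D *ᵥ x := fun x hx => by
    simpa [dotProduct_conjM_mulVec, gammaE_mulVec, hWη x hx] using hVD x (hWV hx)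
  have heW : e ∉ W := fun h => by
    have := hWD e h
    rw [hDe, dotProduct_smul, he, smul_eq_mul, mul_one, mul_one] at this
    exact this.not_gt hlam
  refine le_eigenvalues_of_lt_finrank _ i (V := W ⊔ Submodule.span ℝ {e}) ?_ fun y hy =>
    le_dotProduct_conjM_of_mem_sup hD he hDe hlam.le hc hWD hy
  rw [Submodule.finrank_sup_span_singleton heW]
  omega

lemma smul_one_le_of_eigenvalues (hD : D.IsHermitian) (h : ∀ i, lam ≤ hD.eigenvalues i) :
    lam • 1 ≤ D :=
  le_of_forall_dotProduct_mulVec_le (isHermitian_smul_one lam) hD fun x => by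
    simpa [smul_mulVec, dotProduct_smul] using
      le_dotProduct_mulVec_of_eigenCoord hD (x := x) fun j => Or.inr (h j)

lemma le_eigenvalues_of_smul_one_le (hD : D.IsHermitian) (h : lam • 1 ≤ D) (i : Fin n) :
    lam ≤ hD.eigenvalues i := by
  simpa [eigenvalues_smul_one] using eigenvalues_le (isHermitian_smul_one lam) hD h i

/-- At a critical point one direction `η₁` maximizes all eigenvalues of `γ_η D γ_η` at once: either
`0`, or an eigenvector for the lowest eigenvalue of `D`. -/
theorem exists_forall_eigenvalues_conjM_le (hD : D.IsHermitian) :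
    ∃ η₁ : Fin n → ℝ, η₁ ⬝ᵥ η₁ ≤ 1 ∧ ∀ η : Fin n → ℝ, η ⬝ᵥ η ≤ 1 → ∀ i,
      (isHermitian_conjM η hD).eigenvalues i ≤ (isHermitian_conjM η₁ hD).eigenvalues i := by
  cases isEmpty_or_nonempty (Fin n)
  · exact ⟨0, by simp, fun _ _ => isEmptyElim⟩
  obtain ⟨m, hm⟩ := Finite.exists_min hD.eigenvalues
  have hlow : hD.eigenvalues m • 1 ≤ D := smul_one_le_of_eigenvalues hD hm
  rcases le_or_gt 0 (hD.eigenvalues m) with hnonneg | hneg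
  · refine ⟨0, by simp, fun η hη i => ?_⟩
    have hD0 : D ≤ conjM (gammaE 0) D := (conjM_gammaE_zero D).ge
    rcases lt_or_ge 0 ((isHermitian_conjM η hD).eigenvalues i) with hpos | hnonpos
    · exact eigenvalues_conjM_le_of_pos hD _ hD0 hη hpos
    · exact (hnonpos.trans hnonneg).trans (le_eigenvalues_of_smul_one_le _ (hlow.trans hD0) i)
  · obtain ⟨e, he, hDe⟩ := exists_eigenvector hD m
    have hDe' : D ≤ conjM (gammaE e) D := le_conjM_eigenvector hD he hDe hneg.le
    refine ⟨e, he.le, fun η hη i => ?_⟩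
    rcases lt_or_ge 0 ((isHermitian_conjM η hD).eigenvalues i) with hpos | hnonpos
    · exact eigenvalues_conjM_le_of_pos hD _ hDe' hη hpos
    rcases lt_or_ge (hD.eigenvalues m) ((isHermitian_conjM η hD).eigenvalues i) with hlt | hle
    · exact eigenvalues_conjM_le_of_nonpos hD he hDe hlt hnonpos
    · exact hle.trans (le_eigenvalues_of_smul_one_le _ (hlow.trans hDe') i)

end OptimalDirection

/-! ### Continuity in the Loewner order -/

section Continuity

lemma abs_dotProduct_mulVec_le {ι : Type*} [Fintype ι] (D : Matrix ι ι ℝ) (x : ι → ℝ) :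
    |x ⬝ᵥ D *ᵥ x| ≤ (∑ i, ∑ j, |D i j|) * (x ⬝ᵥ x) := by
  have hx : ∀ i j, |x i * x j| ≤ x ⬝ᵥ x := fun i j => by
    rw [abs_mul]
    nlinarith [two_mul_le_add_sq |x i| |x j|, sq_abs (x i), sq_abs (x j),
      sq_le_dotProduct_self x i, sq_le_dotProduct_self x j]
  have hexp : x ⬝ᵥ D *ᵥ x = ∑ i, ∑ j, D i j * (x i * x j) := by
    simp only [dotProduct, mulVec, Finset.mul_sum]
    exact Finset.sum_congr rfl fun i _ => Finset.sum_congr rfl fun j _ => by ring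
  rw [hexp, Finset.sum_mul]
  refine (Finset.abs_sum_le_sum_abs _ _).trans (Finset.sum_le_sum fun i _ => ?_)
  rw [Finset.sum_mul]
  refine (Finset.abs_sum_le_sum_abs _ _).trans (Finset.sum_le_sum fun j _ => ?_)
  rw [abs_mul]
  exact mul_le_mul_of_nonneg_left (hx i j) (abs_nonneg _)

lemma le_add_smul_one_of_sum_abs_le {ι : Type*} [Fintype ι] [DecidableEq ι] {A B : Matrix ι ι ℝ}
    (hA : A.IsHermitian) (hB : B.IsHermitian) {ε : ℝ} (h : ∑ i, ∑ j, |(A - B) i j| ≤ ε) :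
    A ≤ B + ε • 1 := by
  refine le_of_forall_dotProduct_mulVec_le hA (isHermitian_add_smul_one hB ε) fun x => ?_
  have hdiff : x ⬝ᵥ A *ᵥ x - x ⬝ᵥ B *ᵥ x ≤ ε * (x ⬝ᵥ x) := by
    rw [← dotProduct_sub, ← sub_mulVec]
    exact (le_abs_self _).trans ((abs_dotProduct_mulVec_le _ x).trans
      (mul_le_mul_of_nonneg_right h (dotProduct_self_nonneg_real x)))
  rw [dotProduct_add_smul_one_mulVec]
  linarith

lemma eventually_le_add_smul_one {ι α : Type*} [Finite ι] [DecidableEq ι] {l : Filter α}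
    {A : α → Matrix ι ι ℝ} {B : Matrix ι ι ℝ} (hA : ∀ k, (A k).IsHermitian) (hB : B.IsHermitian)
    (h : Tendsto A l (𝓝 B)) {ε : ℝ} (hε : 0 < ε) :
    ∀ᶠ k in l, A k ≤ B + ε • 1 ∧ B ≤ A k + ε • 1 := by
  cases nonempty_fintype ι
  have hcont : Continuous fun M : Matrix ι ι ℝ => ∑ i, ∑ j, |(M - B) i j| :=
    continuous_finsetSum _ fun i _ => continuous_finsetSum _ fun j _ =>
      ((continuous_id.sub continuous_const).matrix_elem i j).abs
  have hlim : Tendsto (fun k => ∑ i, ∑ j, |(A k - B) i j|) l (𝓝 0) := by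
    simpa [Function.comp_def] using (hcont.tendsto B).comp h
  filter_upwards [hlim.eventually_le_const hε] with k hk
  refine ⟨le_add_smul_one_of_sum_abs_le (hA k) hB hk,
    le_add_smul_one_of_sum_abs_le hB (hA k) (hk.trans' (le_of_eq ?_))⟩
  simp only [Matrix.sub_apply, abs_sub_comm]

lemma continuous_eigenvalues {X ι : Type*} [TopologicalSpace X] [Fintype ι] [DecidableEq ι]
    {A : X → Matrix ι ι ℝ} (hA : Continuous A) (hherm : ∀ x, (A x).IsHermitian) :
    Continuous fun x => (hherm x).eigenvalues := by
  refine continuous_pi fun i => continuous_iff_continuousAt.2 fun x => ?_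
  refine Metric.tendsto_nhds.2 fun ε hε => ?_
  filter_upwards [eventually_le_add_smul_one hherm (hherm x) (hA.tendsto x) (half_pos hε)]
    with y ⟨hyx, hxy⟩
  rw [Real.dist_eq, abs_lt]
  constructor <;> linarith [eigenvalues_le_add (hherm y) (hherm x) hyx i,
    eigenvalues_le_add (hherm x) (hherm y) hxy i]

lemma continuous_gammaE : Continuous (gammaE : (Fin n → ℝ) → Matrix (Fin n) (Fin n) ℝ) :=
  continuous_const.sub (continuous_id.matrix_vecMulVec continuous_id)

lemma tendsto_conjM_gammaE {α : Type*} {l : Filter α} {η : α → Fin n → ℝ} {η₀ : Fin n → ℝ}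
    {M : α → Matrix (Fin n) (Fin n) ℝ} {M₀ : Matrix (Fin n) (Fin n) ℝ}
    (hη : Tendsto η l (𝓝 η₀)) (hM : Tendsto M l (𝓝 M₀)) :
    Tendsto (fun k => conjM (gammaE (η k)) (M k)) l (𝓝 (conjM (gammaE η₀) M₀)) := by
  have hγ := (continuous_gammaE.tendsto η₀).comp hη
  exact (hγ.mul hM).mul hγ

end Continuity

/-! ### The relaxed subsolution condition on jets -/

section Directions

/-- `η` is an admissible direction for the gradient `p`: it is `p / |p|` when `p ≠ 0`, and an
arbitrary vector of the closed unit ball when `p = 0`. -/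
def IsDirection (p η : Fin n → ℝ) : Prop :=
  η ⬝ᵥ η ≤ 1 ∧ eucNorm p • η = p

lemma eucNorm_zero : eucNorm (0 : Fin n → ℝ) = 0 := by
  simp [eucNorm, sqNorm]

lemma continuous_eucNorm : Continuous (eucNorm : (Fin n → ℝ) → ℝ) := by
  unfold eucNorm sqNorm
  fun_prop

lemma isDirection_zero {η : Fin n → ℝ} : IsDirection 0 η ↔ eucNorm η ≤ 1 := by
  simp [eucNorm_le_one_iff, IsDirection, eucNorm_zero]

lemma exists_isDirection (p : Fin n → ℝ) : ∃ η, IsDirection p η := by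
  rcases eq_or_ne p 0 with rfl | hp
  · exact ⟨0, by simp [IsDirection]⟩
  · have hpos := eucNorm_pos hp
    refine ⟨(eucNorm p)⁻¹ • p, le_of_eq ?_, ?_⟩
    · rw [smul_dotProduct, dotProduct_smul, ← eucNorm_sq, smul_eq_mul, smul_eq_mul]
      field_simp
    · rw [smul_smul, mul_inv_cancel₀ hpos.ne', one_smul]

lemma convex_setOf_dotProduct_self_le_one : Convex ℝ {η : Fin n → ℝ | η ⬝ᵥ η ≤ 1} := by
  intro η hη ζ hζ a b ha hb hab
  obtain rfl : b = 1 - a := by linarith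
  have hdiff := dotProduct_self_nonneg_real (η - ζ)
  simp only [mem_ofPred_eq, add_dotProduct, dotProduct_add, smul_dotProduct, dotProduct_smul,
    smul_eq_mul, sub_dotProduct, dotProduct_sub, dotProduct_comm ζ η] at hη hζ hdiff ⊢
  nlinarith [mul_nonneg (mul_nonneg ha hb) hdiff, mul_nonneg ha (sub_nonneg.2 hη),
    mul_nonneg hb (sub_nonneg.2 hζ)]

lemma convex_setOf_isDirection (p : Fin n → ℝ) : Convex ℝ {η | IsDirection p η} := by
  rintro η ⟨hη, hηp⟩ ζ ⟨hζ, hζp⟩ a b ha hb hab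
  refine ⟨convex_setOf_dotProduct_self_le_one hη hζ ha hb hab, ?_⟩
  rw [smul_add, smul_comm _ a, smul_comm _ b, hηp, hζp, ← add_smul, hab, one_smul]

lemma isCompact_setOf_dotProduct_self_le_one : IsCompact {η : Fin n → ℝ | η ⬝ᵥ η ≤ 1} := by
  refine (isCompact_Icc (a := fun _ => (-1 : ℝ)) (b := fun _ => 1)).of_isClosed_subset
    (isClosed_le (by fun_prop) continuous_const) fun η (hη : η ⬝ᵥ η ≤ 1) => ?_
  have habs : ∀ i, |η i| ≤ 1 := fun i =>
    abs_le_one_iff_mul_self_le_one.2 (by linarith [sq_le_dotProduct_self η i, pow_two (η i)])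
  exact ⟨fun i => (abs_le.1 (habs i)).1, fun i => (abs_le.1 (habs i)).2⟩

lemma isClosed_setOf_isDirection :
    IsClosed {q : (Fin n → ℝ) × (Fin n → ℝ) | IsDirection q.1 q.2} :=
  (isClosed_le (f := fun q : (Fin n → ℝ) × (Fin n → ℝ) => q.2 ⬝ᵥ q.2) (by fun_prop)
    continuous_const).and
    (isClosed_eq ((continuous_eucNorm.comp continuous_fst).smul continuous_snd) continuous_fst)

lemma exists_subseq_isDirection {p η : ℕ → Fin n → ℝ} {p₀ : Fin n → ℝ}
    (hp : Tendsto p atTop (𝓝 p₀)) (hη : ∀ᶠ k in atTop, IsDirection (p k) (η k)) :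
    ∃ η₀, IsDirection p₀ η₀ ∧ ∃ φ : ℕ → ℕ, StrictMono φ ∧ Tendsto (η ∘ φ) atTop (𝓝 η₀) := by
  obtain ⟨η₀, -, φ, hφ, hlim⟩ := isCompact_setOf_dotProduct_self_le_one.tendsto_subseq'
    (hη.mono fun k hk => hk.1).frequently
  exact ⟨η₀, isClosed_setOf_isDirection.mem_of_tendsto
    ((hp.comp hφ.tendsto_atTop).prodMk_nhds hlim) (hφ.tendsto_atTop.eventually hη), φ, hφ, hlim⟩

end Directions

section Jets

variable {K : Set (Fin n → ℝ)} {f : (Fin n → ℝ) → ℝ}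

/-- The jet `(τ, p, M)` satisfies `τ ≤ F(γ_p M γ_p)` in a relaxed sense, for which the condition is
closed in `(τ, p, M)`: the eigenvalues only need to lie in `K` after a shift by any `ε > 0`, and
nothing is required when `τ ≤ 0`. -/
def JetSubsolution (K : Set (Fin n → ℝ)) (f : (Fin n → ℝ) → ℝ) (τ : ℝ) (p : Fin n → ℝ)
    (M : Matrix (Fin n) (Fin n) ℝ) : Prop :=
  τ ≤ 0 ∨ ∃ η, IsDirection p η ∧ ∀ ε : ℝ, 0 < ε →
    eigIn K (conjM (gammaE η) M + ε • 1) ∧ τ ≤ Fof f (conjM (gammaE η) M + ε • 1)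

lemma JetSubsolution.mono (hf : ConcaveCurvature K f) (hK : GoodCone K) {τ : ℝ} {p : Fin n → ℝ}
    {M N : Matrix (Fin n) (Fin n) ℝ} (h : JetSubsolution K f τ p M) (hMN : M ≤ N) :
    JetSubsolution K f τ p N := by
  refine h.imp_right fun ⟨η, hη, h⟩ => ⟨η, hη, fun ε hε => ?_⟩
  have hle := add_le_add_left (conjM_gammaE_mono η hMN) (ε • 1)
  exact ⟨(h ε hε).1.mono hK hle, (h ε hε).2.trans ((h ε hε).1.Fof_mono hf hK hle)⟩

lemma JetSubsolution.of_tendsto (hf : ConcaveCurvature K f) (hK : GoodCone K) {τ : ℕ → ℝ}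
    {p : ℕ → Fin n → ℝ} {M : ℕ → Matrix (Fin n) (Fin n) ℝ} {τ₀ : ℝ} {p₀ : Fin n → ℝ}
    {M₀ : Matrix (Fin n) (Fin n) ℝ} (hτ : Tendsto τ atTop (𝓝 τ₀)) (hp : Tendsto p atTop (𝓝 p₀))
    (hM : Tendsto M atTop (𝓝 M₀)) (hMherm : ∀ k, (M k).IsHermitian)
    (h : ∀ k, JetSubsolution K f (τ k) (p k) (M k)) : JetSubsolution K f τ₀ p₀ M₀ := by
  rcases le_or_gt τ₀ 0 with hτ₀ | hτ₀
  · exact Or.inl hτ₀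
  obtain ⟨η, hη⟩ := Eventually.choice <| (hτ.eventually_const_lt hτ₀).mono fun k hk =>
    (h k).resolve_left hk.not_ge
  obtain ⟨η₀, hη₀, φ, hφ, hlim⟩ := exists_subseq_isDirection hp (hη.mono fun k hk => hk.1)
  have hφ' := hφ.tendsto_atTop
  have hA := tendsto_conjM_gammaE hlim (hM.comp hφ')
  have hM₀ : M₀.IsHermitian := (isClosed_eq continuous_id.matrix_conjTranspose
    continuous_id).mem_of_tendsto hM (Eventually.of_forall hMherm)
  refine Or.inr ⟨η₀, hη₀, fun ε hε => ?_⟩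
  have hev : ∀ᶠ k in atTop, eigIn K (conjM (gammaE η₀) M₀ + ε • 1) ∧
      τ (φ k) ≤ Fof f (conjM (gammaE η₀) M₀ + ε • 1) := by
    filter_upwards [hφ'.eventually hη, eventually_le_add_smul_one
      (fun k => isHermitian_conjM _ (hMherm (φ k))) (isHermitian_conjM η₀ hM₀) hA (half_pos hε)]
      with k hk ⟨hle, _⟩
    obtain ⟨hin, hτle⟩ := hk.2 (ε / 2) (half_pos hε)
    have hle' := add_le_add_left hle ((ε / 2) • 1)
    rw [add_assoc, ← add_smul, add_halves] at hle'
    exact ⟨hin.mono hK hle', hτle.trans (hin.Fof_mono hf hK hle')⟩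
  exact ⟨hev.exists.choose_spec.1, le_of_tendsto (hτ.comp hφ') (hev.mono fun k hk => hk.2)⟩

lemma JetSubsolution.of_forall_add_smul_one (hf : ConcaveCurvature K f) (hK : GoodCone K) {τ : ℝ}
    {p : Fin n → ℝ} {M : Matrix (Fin n) (Fin n) ℝ} (hM : M.IsHermitian)
    (h : ∀ ε : ℝ, 0 < ε → JetSubsolution K f τ p (M + ε • 1)) : JetSubsolution K f τ p M := by
  have hlim : Tendsto (fun k : ℕ => M + (1 / ((k : ℝ) + 1)) • 1) atTop (𝓝 M) := by
    simpa using tendsto_const_nhds.add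
      ((tendsto_one_div_add_atTop_nhds_zero_nat (𝕜 := ℝ)).smul_const (1 : Matrix (Fin n) (Fin n) ℝ))
  exact .of_tendsto hf hK tendsto_const_nhds tendsto_const_nhds hlim
    (fun _ => isHermitian_add_smul_one hM _) fun k => h _ Nat.one_div_pos_of_nat

/-- The directions at `p` form a connected set, and the eigenvalues cannot cross `∂K`, where `F`
vanishes. -/
lemma eigIn_of_forall_lt_Fof (hf : ConcaveCurvature K f) (hK : GoodCone K) {p : Fin n → ℝ}
    {M : Matrix (Fin n) (Fin n) ℝ} (hM : M.IsHermitian)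
    (hpos : ∀ η, IsDirection p η → 0 < Fof f (conjM (gammaE η) M))
    (hex : ∃ η, IsDirection p η ∧ eigIn K (conjM (gammaE η) M)) {η : Fin n → ℝ}
    (hη : IsDirection p η) : eigIn K (conjM (gammaE η) M) := by
  obtain ⟨ζ, hζ, hζK⟩ := hex
  have hcont : Continuous fun η : Fin n → ℝ => (isHermitian_conjM η hM).eigenvalues :=
    continuous_eigenvalues
      ((continuous_gammaE.matrix_mul continuous_const).matrix_mul continuous_gammaE) _
  have hsub : {η | IsDirection p η} ⊆ {η | (isHermitian_conjM η hM).eigenvalues ∈ K} := by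
    refine (convex_setOf_isDirection p).isPreconnected.subset_of_closure_inter_subset
      (hK.isOpen.preimage hcont) ⟨ζ, hζ, (eigIn_iff (isHermitian_conjM ζ hM)).1 hζK⟩ ?_
    rintro η ⟨hηcl, hη⟩
    by_contra hηK
    have hfr : (isHermitian_conjM η hM).eigenvalues ∈ frontier K :=
      hK.isOpen.frontier_eq.ge ⟨hcont.closure_preimage_subset K hηcl, hηK⟩
    have := hpos η hη
    rw [Fof_eq (isHermitian_conjM η hM), hf.eq_zero_of_mem_frontier _ hfr] at this
    exact this.false
  exact (eigIn_iff _).2 (hsub hη)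

lemma eigIn.exists_pos_add_smul_one {B : Matrix (Fin n) (Fin n) ℝ} (h : eigIn K B)
    (hf : ConcaveCurvature K f) (hK : GoodCone K) {τ : ℝ} (hτ : τ < Fof f B) :
    ∃ ρ : ℝ, 0 < ρ ∧ eigIn K (B + (-ρ) • 1) ∧ τ < Fof f (B + (-ρ) • 1) := by
  have hneg : Tendsto (fun ρ : ℝ => -ρ) (𝓝[>] 0) (𝓝 0) :=
    (continuous_neg.tendsto' 0 0 neg_zero).mono_left nhdsWithin_le_nhds
  have hlt := ((h.tendsto_Fof_add_smul_one hf hK).comp hneg).eventually_const_lt hτ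
  have hmem := hneg.eventually (h.eventually_add_smul_one hK)
  obtain ⟨ρ, hρlt, hρmem, hρ⟩ := (hlt.and (hmem.and self_mem_nhdsWithin)).exists
  exact ⟨ρ, hρ, hρmem, hρlt⟩

lemma JetSubsolution.exists_of_tendsto (hf : ConcaveCurvature K f) (hK : GoodCone K) {τ : ℝ}
    {p : Fin n → ℝ} {M : Matrix (Fin n) (Fin n) ℝ} (hM : M.IsHermitian)
    (h : ∀ η, IsDirection p η →
      eigIn K (conjM (gammaE η) M) ∧ τ < Fof f (conjM (gammaE η) M))
    {τs : ℕ → ℝ} {ps : ℕ → Fin n → ℝ} {Ms : ℕ → Matrix (Fin n) (Fin n) ℝ}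
    (hτs : Tendsto τs atTop (𝓝 τ)) (hps : Tendsto ps atTop (𝓝 p)) (hMs : Tendsto Ms atTop (𝓝 M))
    (hMsherm : ∀ k, (Ms k).IsHermitian) : ∃ k, JetSubsolution K f (τs k) (ps k) (Ms k) := by
  choose η hη using fun k => exists_isDirection (ps k)
  obtain ⟨η₀, hη₀, φ, hφ, hlim⟩ := exists_subseq_isDirection hps (Eventually.of_forall hη)
  have hφ' := hφ.tendsto_atTop
  have hA := tendsto_conjM_gammaE hlim (hMs.comp hφ')
  obtain ⟨ρ, hρ, hρK, hρF⟩ := (h η₀ hη₀).1.exists_pos_add_smul_one hf hK (h η₀ hη₀).2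
  obtain ⟨k, ⟨-, hkle⟩, hkτ⟩ := ((eventually_le_add_smul_one
    (fun k => isHermitian_conjM _ (hMsherm (φ k))) (isHermitian_conjM η₀ hM) hA hρ).and
    ((hτs.comp hφ').eventually_lt_const hρF)).exists
  refine ⟨φ k, Or.inr ⟨η (φ k), hη _, fun ε hε => ?_⟩⟩
  have hle : conjM (gammaE η₀) M + (-ρ) • 1 ≤ conjM (gammaE (η (φ k))) (Ms (φ k)) + ε • 1 := by
    refine le_trans ?_ (le_add_smul_one _ hε.le)
    simpa [neg_smul] using add_le_add_left hkle ((-ρ) • 1)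
  exact ⟨hρK.mono hK hle, hkτ.le.trans (hρK.Fof_mono hf hK hle)⟩

lemma eventually_jetSubsolution (hf : ConcaveCurvature K f) (hK : GoodCone K) {τ : ℝ}
    {p : Fin n → ℝ} {M : Matrix (Fin n) (Fin n) ℝ} (hM : M.IsHermitian)
    (hex : ∃ η, IsDirection p η ∧ eigIn K (conjM (gammaE η) M))
    (h : ∀ η, IsDirection p η → τ < Fof f (conjM (gammaE η) M)) :
    ∀ᶠ q : ℝ × (Fin n → ℝ) × Matrix (Fin n) (Fin n) ℝ in 𝓝 (τ, p, M),
      q.2.2.IsHermitian → JetSubsolution K f q.1 q.2.1 q.2.2 := by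
  rcases lt_or_ge τ 0 with hτ | hτ
  · filter_upwards [continuous_fst.tendsto (τ, p, M) (Iio_mem_nhds hτ)] with q hq _
    exact Or.inl (le_of_lt hq)
  have hall : ∀ η, IsDirection p η →
      eigIn K (conjM (gammaE η) M) ∧ τ < Fof f (conjM (gammaE η) M) := fun η hη =>
    ⟨eigIn_of_forall_lt_Fof hf hK hM (fun η hη => hτ.trans_lt (h η hη)) hex hη, h η hη⟩
  by_contra hcon
  have : FirstCountableTopology (Matrix (Fin n) (Fin n) ℝ) :=
    inferInstanceAs (FirstCountableTopology (Fin n → Fin n → ℝ))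
  obtain ⟨q, hq, hqnot⟩ := exists_seq_forall_of_frequently (not_eventually.1 hcon)
  push Not at hqnot
  obtain ⟨k, hk⟩ := JetSubsolution.exists_of_tendsto hf hK hM hall
    ((continuous_fst.tendsto _).comp hq)
    (((continuous_fst.comp continuous_snd).tendsto _).comp hq)
    (((continuous_snd.comp continuous_snd).tendsto _).comp hq) fun k => (hqnot k).1
  exact (hqnot k).2 hk

lemma JetSubsolution.le_Fof_gammaP (hf : ConcaveCurvature K f) (hK : GoodCone K) {τ : ℝ}
    {p : Fin n → ℝ} {M : Matrix (Fin n) (Fin n) ℝ} (h : JetSubsolution K f τ p M) (hp : p ≠ 0)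
    (hin : eigIn K (conjM (gammaP p) M)) : τ ≤ Fof f (conjM (gammaP p) M) := by
  rcases h with h | ⟨η, hη, h⟩
  · exact h.trans (hin.Fof_pos hf).le
  · rw [gammaP_eq_gammaE hp hη.2] at hin ⊢
    exact hin.le_Fof_of_forall_pos hf hK fun ε hε => (h ε hε).2

lemma JetSubsolution.exists_le_Fof_gammaE (hf : ConcaveCurvature K f) (hK : GoodCone K) {τ : ℝ}
    {M : Matrix (Fin n) (Fin n) ℝ} (h : JetSubsolution K f τ 0 M) (hM : M.IsHermitian)
    (hin : ∃ η : Fin n → ℝ, eucNorm η ≤ 1 ∧ eigIn K (conjM (gammaE η) M)) :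
    ∃ η : Fin n → ℝ, eucNorm η ≤ 1 ∧ τ ≤ Fof f (conjM (gammaE η) M) := by
  obtain ⟨ζ, hζ, hζK⟩ := hin
  rcases h with h | ⟨η, hη, h⟩
  · exact ⟨ζ, hζ, h.trans (hζK.Fof_pos hf).le⟩
  obtain ⟨η₁, hη₁, hmax⟩ := exists_forall_eigenvalues_conjM_le hM
  have hη₁K : eigIn K (conjM (gammaE η₁) M) := ⟨isHermitian_conjM η₁ hM,
    hK.mono ((eigIn_iff (isHermitian_conjM ζ hM)).1 hζK)
      (hmax ζ ((eucNorm_le_one_iff ζ).1 hζ))⟩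
  refine ⟨η₁, (eucNorm_le_one_iff _).2 hη₁, hη₁K.le_Fof_of_forall_pos hf hK fun ε hε => ?_⟩
  obtain ⟨hηK, hle⟩ := h ε hε
  refine hle.trans ?_
  have hherm := fun η => isHermitian_add_smul_one (isHermitian_conjM η hM) ε
  rw [Fof_eq (hherm η), Fof_eq (hherm η₁)]
  refine hf.mono hK ((eigIn_iff (hherm η)).1 hηK) fun i => ?_
  rw [eigenvalues_add_smul_one (isHermitian_conjM η hM),
    eigenvalues_add_smul_one (isHermitian_conjM η₁ hM)]
  exact add_le_add_left (hmax η hη.1 i) ε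

end Jets

/-! ### Semijets -/

section EuclideanNorm

lemma eucNorm_eq_norm_toLp (x : Fin n → ℝ) : eucNorm x = ‖WithLp.toLp 2 x‖ := by
  simp [eucNorm, sqNorm, EuclideanSpace.norm_eq]

lemma eucNorm_nonneg (x : Fin n → ℝ) : 0 ≤ eucNorm x :=
  Real.sqrt_nonneg _

lemma norm_le_eucNorm (x : Fin n → ℝ) : ‖x‖ ≤ eucNorm x :=
  (pi_norm_le_iff_of_nonneg (eucNorm_nonneg x)).2 fun i => by
    rw [Real.norm_eq_abs]
    exact abs_le_of_sq_le_sq (by simpa only [eucNorm_sq] using sq_le_dotProduct_self x i)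
      (eucNorm_nonneg x)

lemma norm_sq_le_add_sq (w : (Fin n → ℝ) × ℝ) : ‖w‖ ^ 2 ≤ w.1 ⬝ᵥ w.1 + w.2 ^ 2 := by
  rw [Prod.norm_def, ← eucNorm_sq, Real.norm_eq_abs, ← sq_abs w.2]
  have hle := pow_le_pow_left₀ (norm_nonneg _) (norm_le_eucNorm w.1) 2
  rcases max_cases ‖w.1‖ |w.2| with ⟨h, _⟩ | ⟨h, _⟩ <;> rw [h]
  · linarith [sq_nonneg |w.2|]
  · linarith [sq_nonneg (eucNorm w.1)]

end EuclideanNorm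

section TestQuadratic

/-- The polynomial `τ t + C t² + p · x + ½ x · M x` in `w = (x, t)`. -/
def testQuadratic (τ C : ℝ) (p : Fin n → ℝ) (M : Matrix (Fin n) (Fin n) ℝ)
    (w : (Fin n → ℝ) × ℝ) : ℝ :=
  τ * w.2 + C * w.2 ^ 2 + p ⬝ᵥ w.1 + 1 / 2 * (w.1 ⬝ᵥ M *ᵥ w.1)

variable {τ C : ℝ} {p : Fin n → ℝ} {M : Matrix (Fin n) (Fin n) ℝ}

lemma continuous_testQuadratic : Continuous (testQuadratic τ C p M) := by
  unfold testQuadratic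
  fun_prop

lemma testQuadratic_zero : testQuadratic τ C p M 0 = 0 := by
  simp [testQuadratic]

lemma testQuadratic_add_smul_one (ε : ℝ) (w : (Fin n → ℝ) × ℝ) :
    testQuadratic τ C p (M + ε • 1) w = testQuadratic τ C p M w + ε / 2 * (w.1 ⬝ᵥ w.1) := by
  rw [testQuadratic, testQuadratic, dotProduct_add_smul_one_mulVec]
  ring

lemma testQuadratic_sub_smul_one (ε : ℝ) (w : (Fin n → ℝ) × ℝ) :
    testQuadratic τ C p (M - ε • 1) w = testQuadratic τ C p M w - ε / 2 * (w.1 ⬝ᵥ w.1) := by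
  rw [sub_eq_add_neg, ← neg_smul, testQuadratic_add_smul_one]
  ring

lemma testQuadratic_add_time (a : ℝ) (w : (Fin n → ℝ) × ℝ) :
    testQuadratic τ (C + a) p M w = testQuadratic τ C p M w + a * w.2 ^ 2 := by
  unfold testQuadratic
  ring

lemma testQuadratic_sub {τ' C' : ℝ} {p' : Fin n → ℝ} {M' : Matrix (Fin n) (Fin n) ℝ}
    (w : (Fin n → ℝ) × ℝ) : testQuadratic (τ - τ') (C - C') (p - p') (M - M') w =
      testQuadratic τ C p M w - testQuadratic τ' C' p' M' w := by
  simp only [testQuadratic, sub_dotProduct, sub_mulVec, dotProduct_sub]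
  ring

lemma testQuadratic_smul (r : ℝ) (d : (Fin n → ℝ) × ℝ) :
    testQuadratic τ C p M (r • d) = (τ * d.2 + p ⬝ᵥ d.1) * r +
      (C * d.2 ^ 2 + 1 / 2 * (d.1 ⬝ᵥ M *ᵥ d.1)) * r ^ 2 := by
  simp only [testQuadratic, Prod.smul_fst, Prod.smul_snd, dotProduct_smul, mulVec_smul,
    smul_dotProduct, smul_eq_mul]
  ring

lemma testQuadratic_add (hM : M.IsHermitian) (d w : (Fin n → ℝ) × ℝ) :
    testQuadratic τ C p M (d + w) = testQuadratic τ C p M d +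
      testQuadratic (τ + 2 * C * d.2) C (p + M *ᵥ d.1) M w := by
  have hsymm : w.1 ⬝ᵥ M *ᵥ d.1 = d.1 ⬝ᵥ M *ᵥ w.1 := by
    rw [dotProduct_mulVec_comm hM, dotProduct_comm]
  have hlin : (M *ᵥ d.1) ⬝ᵥ w.1 = d.1 ⬝ᵥ M *ᵥ w.1 := by rw [dotProduct_comm, hsymm]
  simp only [testQuadratic, Prod.fst_add, Prod.snd_add, mulVec_add, dotProduct_add,
    add_dotProduct, hsymm, hlin]
  ring

lemma testQuadratic_smul_one (τ C : ℝ) (w : (Fin n → ℝ) × ℝ) :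
    testQuadratic τ 0 0 (C • 1) w = τ * w.2 + C / 2 * (w.1 ⬝ᵥ w.1) := by
  simp only [testQuadratic, smul_mulVec, one_mulVec, dotProduct_smul, smul_eq_mul,
    zero_dotProduct]
  ring

end TestQuadratic

section Semijets

variable {v w : (Fin n → ℝ) × ℝ → ℝ} {z₀ : (Fin n → ℝ) × ℝ} {τ τ' : ℝ} {p p' : Fin n → ℝ}
  {M M' : Matrix (Fin n) (Fin n) ℝ}

/-- `(τ, p, M)` is a parabolic superjet of `v` at `z₀`: up to arbitrarily small multiples of `|x|²`
and some multiple of `t²`, the function `v` lies below the polynomial with this jet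
near `z₀`. -/
def HasSuperjet (v : (Fin n → ℝ) × ℝ → ℝ) (z₀ : (Fin n → ℝ) × ℝ) (τ : ℝ) (p : Fin n → ℝ)
    (M : Matrix (Fin n) (Fin n) ℝ) : Prop :=
  ∀ ε : ℝ, 0 < ε → ∃ C : ℝ, ∀ᶠ z in 𝓝 z₀,
    v z - v z₀ ≤ testQuadratic τ C p (M + ε • 1) (z - z₀)

/-- `(τ, p, M)` is a parabolic subjet of `v` at `z₀`, the counterpart of `HasSuperjet` from
below. -/
def HasSubjet (v : (Fin n → ℝ) × ℝ → ℝ) (z₀ : (Fin n → ℝ) × ℝ) (τ : ℝ) (p : Fin n → ℝ)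
    (M : Matrix (Fin n) (Fin n) ℝ) : Prop :=
  ∀ ε : ℝ, 0 < ε → ∃ C : ℝ, ∀ᶠ z in 𝓝 z₀,
    testQuadratic τ C p (M - ε • 1) (z - z₀) ≤ v z - v z₀

lemma HasSuperjet.mono (h : HasSuperjet w z₀ τ p M)
    (hvw : ∀ᶠ z in 𝓝 z₀, v z - v z₀ ≤ w z - w z₀) : HasSuperjet v z₀ τ p M := fun ε hε => by
  obtain ⟨C, hC⟩ := h ε hε
  exact ⟨C, (hvw.and hC).mono fun z hz => hz.1.trans hz.2⟩

lemma HasSubjet.mono (h : HasSubjet v z₀ τ p M)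
    (hvw : ∀ᶠ z in 𝓝 z₀, v z - v z₀ ≤ w z - w z₀) : HasSubjet w z₀ τ p M := fun ε hε => by
  obtain ⟨C, hC⟩ := h ε hε
  exact ⟨C, (hvw.and hC).mono fun z hz => hz.2.trans hz.1⟩

lemma hasSuperjet_testQuadratic (C : ℝ) (hM : M.IsHermitian) (z₀ z₁ : (Fin n → ℝ) × ℝ) :
    HasSuperjet (fun z => testQuadratic τ C p M (z - z₀)) z₁ (τ + 2 * C * (z₁ - z₀).2)
      (p + M *ᵥ (z₁ - z₀).1) M := by
  refine fun ε hε => ⟨C, Eventually.of_forall fun z => ?_⟩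
  beta_reduce
  rw [← sub_add_sub_cancel' z₁ z₀ z, testQuadratic_add hM, testQuadratic_add_smul_one,
    add_sub_cancel_left]
  exact le_add_of_nonneg_right (mul_nonneg (half_pos hε).le (dotProduct_self_nonneg_real _))

lemma hasSubjet_testQuadratic (C : ℝ) (hM : M.IsHermitian) (z₀ z₁ : (Fin n → ℝ) × ℝ) :
    HasSubjet (fun z => testQuadratic τ C p M (z - z₀)) z₁ (τ + 2 * C * (z₁ - z₀).2)
      (p + M *ᵥ (z₁ - z₀).1) M := by
  refine fun ε hε => ⟨C, Eventually.of_forall fun z => ?_⟩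
  beta_reduce
  rw [← sub_add_sub_cancel' z₁ z₀ z, testQuadratic_add hM, testQuadratic_sub_smul_one,
    add_sub_cancel_left]
  exact sub_le_self _ (mul_nonneg (half_pos hε).le (dotProduct_self_nonneg_real _))

lemma HasSubjet.sub (h : HasSubjet v z₀ τ p M) (h' : HasSuperjet w z₀ τ' p' M') :
    HasSubjet (v - w) z₀ (τ - τ') (p - p') (M - M') := fun ε hε => by
  obtain ⟨C, hC⟩ := h (ε / 2) (half_pos hε)
  obtain ⟨C', hC'⟩ := h' (ε / 2) (half_pos hε)
  refine ⟨C - C', (hC.and hC').mono fun z hz => ?_⟩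
  rw [testQuadratic_sub_smul_one, testQuadratic_add_smul_one] at hz
  rw [testQuadratic_sub_smul_one, testQuadratic_sub, Pi.sub_apply, Pi.sub_apply]
  linarith [hz.1, hz.2]

lemma coeff_nonpos_of_eventually_quadratic_nonpos {a b : ℝ}
    (h : ∀ᶠ r in 𝓝[>] (0 : ℝ), a * r + b * r ^ 2 ≤ 0) : a ≤ 0 := by
  have hlim : Tendsto (fun r : ℝ => a + b * r) (𝓝[>] 0) (𝓝 a) := by
    have : Continuous fun r : ℝ => a + b * r := by fun_prop
    exact (this.tendsto' 0 a (by simp)).mono_left nhdsWithin_le_nhds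
  refine le_of_tendsto hlim ((h.and self_mem_nhdsWithin).mono fun r hr => ?_)
  refine nonpos_of_mul_nonpos_left (b := r) ?_ hr.2
  linarith [hr.1]

lemma HasSubjet.eventually_testQuadratic_nonpos (h : HasSubjet v z₀ τ p M)
    {d : (Fin n → ℝ) × ℝ} (hd : ∀ᶠ r in 𝓝[>] (0 : ℝ), v (z₀ + r • d) ≤ v z₀) {ε : ℝ}
    (hε : 0 < ε) : ∃ C : ℝ, ∀ᶠ r in 𝓝[>] (0 : ℝ),
      testQuadratic τ C p (M - ε • 1) (r • d) ≤ 0 := by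
  obtain ⟨C, hC⟩ := h ε hε
  have hline : Tendsto (fun r : ℝ => z₀ + r • d) (𝓝[>] 0) (𝓝 z₀) := by
    have hcont : Continuous fun r : ℝ => z₀ + r • d := by fun_prop
    exact (hcont.tendsto' 0 z₀ (by simp)).mono_left nhdsWithin_le_nhds
  refine ⟨C, ((hline.eventually hC).and hd).mono fun r hr => ?_⟩
  have hr₁ := hr.1
  rw [add_sub_cancel_left] at hr₁
  linarith [hr.2]

lemma HasSubjet.deriv_nonpos (h : HasSubjet v z₀ τ p M) {d : (Fin n → ℝ) × ℝ}
    (hd : ∀ᶠ r in 𝓝[>] (0 : ℝ), v (z₀ + r • d) ≤ v z₀) : τ * d.2 + p ⬝ᵥ d.1 ≤ 0 := by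
  obtain ⟨C, hC⟩ := h.eventually_testQuadratic_nonpos hd one_pos
  exact coeff_nonpos_of_eventually_quadratic_nonpos (hC.mono fun r hr => by
    rwa [testQuadratic_smul] at hr)

lemma HasSubjet.dotProduct_mulVec_nonpos (h : HasSubjet v z₀ τ p M) {e : Fin n → ℝ}
    (hp : p ⬝ᵥ e = 0) (he : ∀ᶠ r in 𝓝[>] (0 : ℝ), v (z₀ + r • (e, 0)) ≤ v z₀) :
    e ⬝ᵥ M *ᵥ e ≤ 0 := by
  have hle : ∀ ε : ℝ, 0 < ε → e ⬝ᵥ M *ᵥ e ≤ ε * (e ⬝ᵥ e) := fun ε hε => by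
    obtain ⟨C, hC⟩ := h.eventually_testQuadratic_nonpos he hε
    obtain ⟨r, hr, hpos⟩ := (hC.and self_mem_nhdsWithin).exists
    have hpos : 0 < r := hpos
    rw [testQuadratic_sub_smul_one, testQuadratic_smul] at hr
    simp only [hp, Prod.smul_fst, dotProduct_smul, smul_dotProduct, smul_eq_mul] at hr
    have : (e ⬝ᵥ M *ᵥ e - ε * (e ⬝ᵥ e)) * r ^ 2 ≤ 0 := by linarith
    linarith [nonpos_of_mul_nonpos_left this (pow_pos hpos 2)]
  have hlim : Tendsto (fun ε : ℝ => ε * (e ⬝ᵥ e)) (𝓝[>] 0) (𝓝 0) :=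
    ((continuous_mul_const _).tendsto' 0 0 (zero_mul _)).mono_left nhdsWithin_le_nhds
  exact ge_of_tendsto hlim (eventually_mem_nhdsWithin.mono hle)

lemma HasSubjet.compare (h : HasSubjet v z₀ τ p M) (h' : HasSuperjet v z₀ τ' p' M')
    (hM : M.IsHermitian) (hM' : M'.IsHermitian) : τ' = τ ∧ p' = p ∧ M ≤ M' := by
  have hsub := h.sub h'
  have hconst : ∀ d : (Fin n → ℝ) × ℝ, ∀ᶠ r in 𝓝[>] (0 : ℝ), (v - v) (z₀ + r • d) ≤ (v - v) z₀ :=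
    fun d => Eventually.of_forall fun r => by simp
  have hτ : ∀ s : ℝ, (τ - τ') * s ≤ 0 := fun s => by simpa using hsub.deriv_nonpos (hconst (0, s))
  have hp : p - p' = 0 := by
    by_contra hne
    have := hsub.deriv_nonpos (hconst (p - p', 0))
    rw [mul_zero, zero_add] at this
    exact this.not_gt (dotProduct_self_pos_real hne)
  refine ⟨by linarith [hτ 1, hτ (-1)], (sub_eq_zero.1 hp).symm,
    le_of_forall_dotProduct_mulVec_le hM hM' fun e => ?_⟩
  have := hsub.dotProduct_mulVec_nonpos (by rw [hp, zero_dotProduct]) (hconst (e, 0))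
  rwa [sub_mulVec, dotProduct_sub, sub_nonpos] at this

end Semijets

/-! ### Viscosity subsolutions -/

section Subsolutions

variable {K : Set (Fin n → ℝ)} {f : (Fin n → ℝ) → ℝ} {v w : (Fin n → ℝ) × ℝ → ℝ}
  {z₀ : (Fin n → ℝ) × ℝ}

/-- `v` is a viscosity subsolution of the level-set flow at `z₀`, in terms of superjets and the
relaxed condition `JetSubsolution`. -/
def IsSubsolutionAt (K : Set (Fin n → ℝ)) (f : (Fin n → ℝ) → ℝ) (v : (Fin n → ℝ) × ℝ → ℝ)
    (z₀ : (Fin n → ℝ) × ℝ) : Prop :=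
  ∀ τ p M, M.IsHermitian → HasSuperjet v z₀ τ p M → JetSubsolution K f τ p M

lemma IsSubsolutionAt.of_le (h : IsSubsolutionAt K f v z₀)
    (hvw : ∀ᶠ z in 𝓝 z₀, v z - v z₀ ≤ w z - w z₀) : IsSubsolutionAt K f w z₀ :=
  fun τ p M hM hw => h τ p M hM (hw.mono hvw)

lemma IsSubsolutionAt.sup (hv : IsSubsolutionAt K f v z₀) (hw : IsSubsolutionAt K f w z₀) :
    IsSubsolutionAt K f (v ⊔ w) z₀ := by
  rcases le_total (w z₀) (v z₀) with h | h
  · refine hv.of_le (Eventually.of_forall fun z => ?_)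
    rw [Pi.sup_apply, Pi.sup_apply, sup_of_le_left h]
    exact sub_le_sub_right le_sup_left _
  · refine hw.of_le (Eventually.of_forall fun z => ?_)
    rw [Pi.sup_apply, Pi.sup_apply, sup_of_le_right h]
    exact sub_le_sub_right le_sup_right _

lemma IsSubsolutionAt.comp_add {h : (Fin n → ℝ) × ℝ} (hv : IsSubsolutionAt K f v (z₀ + h))
    (a : ℝ) : IsSubsolutionAt K f (fun z => v (z + h) - a) z₀ := fun τ p M hM hsuper =>
  hv τ p M hM fun ε hε => by
    obtain ⟨C, hC⟩ := hsuper ε hε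
    have hshift : Tendsto (fun z => z - h) (𝓝 (z₀ + h)) (𝓝 z₀) :=
      (continuous_id.sub continuous_const).tendsto' _ _ (by simp)
    refine ⟨C, (hshift.eventually hC).mono fun z hz => ?_⟩
    beta_reduce at hz
    rwa [sub_add_cancel, sub_sub_sub_cancel_right, sub_sub, add_comm h] at hz

lemma HasSubjet.isSubsolutionAt {τ : ℝ} {p : Fin n → ℝ} {M : Matrix (Fin n) (Fin n) ℝ}
    (h : HasSubjet v z₀ τ p M) (hf : ConcaveCurvature K f) (hK : GoodCone K)
    (hM : M.IsHermitian) (hjet : JetSubsolution K f τ p M) : IsSubsolutionAt K f v z₀ := by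
  intro τ' p' M' hM' h'
  obtain ⟨rfl, rfl, hle⟩ := h.compare h' hM hM'
  exact hjet.mono hf hK hle

end Subsolutions

section Envelope

lemma frequently_exists_isLocalMax_sub {X : Type*} [PseudoMetricSpace X] [ProperSpace X]
    {𝒮 : Set (X → ℝ)} {u φ : X → ℝ} {z₀ : X} {κ : ℝ} (hκ : 0 < κ)
    (hcont : ∀ v ∈ 𝒮, Continuous v) (hle : ∀ v ∈ 𝒮, v ≤ u) (hφ : Continuous φ)
    (happrox : ∀ a < u z₀, ∃ v ∈ 𝒮, a < v z₀)
    (hmax : ∀ᶠ z in 𝓝 z₀, u z - φ z ≤ u z₀ - φ z₀ - κ * dist z z₀ ^ 2) :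
    ∃ᶠ z₁ in 𝓝 z₀, ∃ v ∈ 𝒮, IsLocalMax (v - φ) z₁ := by
  rw [Metric.nhds_basis_closedBall.frequently_iff]
  intro r hr
  obtain ⟨ρ, hρ, hball⟩ := Metric.nhds_basis_closedBall.eventually_iff.1 hmax
  have hr' : 0 < min r ρ := lt_min hr hρ
  obtain ⟨v, hv, hvz₀⟩ := happrox (u z₀ - κ * min r ρ ^ 2)
    (sub_lt_self _ (mul_pos hκ (pow_pos hr' 2)))
  obtain ⟨z₁, hz₁, hz₁max⟩ := (isCompact_closedBall z₀ (min r ρ)).exists_isMaxOn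
    ⟨z₀, Metric.mem_closedBall_self hr'.le⟩ ((hcont v hv).sub hφ).continuousOn
  have hz₀ : v z₀ - φ z₀ ≤ v z₁ - φ z₁ := hz₁max (Metric.mem_closedBall_self hr'.le)
  have hz₁u := hball (Metric.closedBall_subset_closedBall (min_le_right r ρ) hz₁)
  have hlt : dist z₁ z₀ < min r ρ := by
    by_contra! hge
    have := mul_le_mul_of_nonneg_left (pow_le_pow_left₀ hr'.le hge 2) hκ.le
    linarith [hle v hv z₁]
  exact ⟨z₁, Metric.closedBall_subset_closedBall (min_le_left r ρ) hz₁, v, hv,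
    hz₁max.isLocalMax (Metric.closedBall_mem_nhds_of_mem hlt)⟩

variable {K : Set (Fin n → ℝ)} {f : (Fin n → ℝ) → ℝ}

lemma isSubsolutionAt_of_forall_lt_exists (hf : ConcaveCurvature K f) (hK : GoodCone K)
    {𝒮 : Set ((Fin n → ℝ) × ℝ → ℝ)} {u : (Fin n → ℝ) × ℝ → ℝ} {z₀ : (Fin n → ℝ) × ℝ}
    (hcont : ∀ v ∈ 𝒮, Continuous v) (hle : ∀ v ∈ 𝒮, v ≤ u)
    (happrox : ∀ a < u z₀, ∃ v ∈ 𝒮, a < v z₀)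
    (hsub : ∀ᶠ z in 𝓝 z₀, ∀ v ∈ 𝒮, IsSubsolutionAt K f v z) : IsSubsolutionAt K f u z₀ := by
  intro τ p M hM hsuper
  refine .of_forall_add_smul_one hf hK hM fun ε hε => ?_
  have hMε := isHermitian_add_smul_one hM ε
  obtain ⟨C, hC⟩ := hsuper (ε / 2) (half_pos hε)
  set φ : (Fin n → ℝ) × ℝ → ℝ := fun z =>
    testQuadratic τ (C + ε / 4) p (M + ε • 1) (z - z₀) with hφdef
  have hφ : Continuous φ := continuous_testQuadratic.comp (continuous_id.sub continuous_const)
  have hmax : ∀ᶠ z in 𝓝 z₀, u z - φ z ≤ u z₀ - φ z₀ - ε / 4 * dist z z₀ ^ 2 := by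
    filter_upwards [hC] with z hz
    have hdist := mul_le_mul_of_nonneg_left (norm_sq_le_add_sq (z - z₀)) (by positivity : 0 ≤ ε / 4)
    rw [testQuadratic_add_smul_one] at hz
    have hφz₀ : φ z₀ = 0 := by simp only [hφdef, sub_self, testQuadratic_zero]
    rw [hφz₀]
    simp only [hφdef, testQuadratic_add_smul_one, testQuadratic_add_time, dist_eq_norm]
    linarith
  have hjets : ∃ᶠ z₁ in 𝓝 z₀, JetSubsolution K f (τ + 2 * (C + ε / 4) * (z₁ - z₀).2)
      (p + (M + ε • 1) *ᵥ (z₁ - z₀).1) (M + ε • 1) := by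
    have hloc := frequently_exists_isLocalMax_sub (by positivity) hcont hle hφ happrox hmax
    refine (hloc.and_eventually hsub).mono fun z₁ ⟨⟨v, hv, hv₁⟩, h₁⟩ => h₁ v hv _ _ _ hMε ?_
    refine (hasSuperjet_testQuadratic _ hMε z₀ z₁).mono (hv₁.mono fun z hz => ?_)
    rw [Pi.sub_apply, Pi.sub_apply] at hz
    linarith
  obtain ⟨z, hz, hzjet⟩ := exists_seq_forall_of_frequently hjets
  have hdiff : Tendsto (fun k => z k - z₀) atTop (𝓝 0) := by
    simpa using hz.sub (tendsto_const_nhds (x := z₀))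
  refine .of_tendsto hf hK ?_ ?_ tendsto_const_nhds (fun _ => hMε) hzjet
  · simpa using tendsto_const_nhds.add
      (((continuous_snd.tendsto _).comp hdiff).const_mul (2 * (C + ε / 4)))
  · have hmul : Continuous fun d : (Fin n → ℝ) × ℝ => p + (M + ε • 1) *ᵥ d.1 := by fun_prop
    exact (hmul.tendsto' 0 p (by simp)).comp hdiff

end Envelope

/-! ### Jets of smooth functions -/

section Taylor

open Asymptotics

lemma isLittleO_sub_sub_fderiv_sub_fderiv {E : Type*} [NormedAddCommGroup E] [NormedSpace ℝ E]
    {φ : E → ℝ} (hφ : ContDiff ℝ 2 φ) (z₀ : E) :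
    (fun z => φ z - φ z₀ - fderiv ℝ φ z₀ (z - z₀) -
      1 / 2 * fderiv ℝ (fderiv ℝ φ) z₀ (z - z₀) (z - z₀)) =o[𝓝 z₀] fun z => ‖z - z₀‖ ^ 2 := by
  set A := fderiv ℝ (fderiv ℝ φ) z₀
  have hderiv : HasFDerivAt (fderiv ℝ φ) A z₀ :=
    ((hφ.fderiv_right (m := 1) (by norm_num)).differentiable (by norm_num) z₀).hasFDerivAt
  have hsymm : IsSymmSndFDerivAt ℝ φ z₀ := hφ.contDiffAt.isSymmSndFDerivAt (by simp)
  have hrem : ∀ y, HasFDerivAt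
      (fun z => φ z - fderiv ℝ φ z₀ (z - z₀) - 1 / 2 * A (z - z₀) (z - z₀))
      (fderiv ℝ φ y - fderiv ℝ φ z₀ - A (y - z₀)) y := by
    intro y
    have hid : HasFDerivAt (fun z : E => z - z₀) (ContinuousLinearMap.id ℝ E) y :=
      (hasFDerivAt_id y).sub_const z₀
    refine (((hφ.differentiable (by norm_num) y).hasFDerivAt.sub
      ((fderiv ℝ φ z₀).hasFDerivAt.comp y hid)).sub
      (((A.hasFDerivAt.comp y hid).clm_apply hid).const_mul (1 / 2))).congr_fderiv ?_
    ext d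
    have hd : A d (y - z₀) = A (y - z₀) d := hsymm _ _
    simp [hd, -map_sub]
    ring
  have := convex_univ.isLittleO_pow_succ (mem_univ z₀) (n := 1)
    (fun y _ => (hrem y).hasFDerivWithinAt) (by simpa using hderiv.isLittleO.norm_right)
  rw [nhdsWithin_univ] at this
  refine this.congr_left fun z => ?_
  simp only [sub_self, map_zero]
  ring

lemma exists_forall_abs_sub_prodMk_zero_le {E F : Type*} [SeminormedAddCommGroup E]
    [NormedSpace ℝ E] [SeminormedAddCommGroup F] [NormedSpace ℝ F]
    (A : E × F →L[ℝ] E × F →L[ℝ] ℝ) {ε : ℝ} (hε : 0 < ε) : ∃ C : ℝ, ∀ w : E × F,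
      |A w w - A (w.1, 0) (w.1, 0)| ≤ ε * ‖w.1‖ ^ 2 + C * ‖w.2‖ ^ 2 := by
  refine ⟨‖A‖ ^ 2 / ε + ‖A‖, fun ⟨y, s⟩ => ?_⟩
  have hsplit : A (y, s) (y, s) - A (y, 0) (y, 0) =
      A (y, 0) (0, s) + A (0, s) (y, 0) + A (0, s) (0, s) := by
    rw [show (y, s) = (y, (0 : F)) + ((0 : E), s) by simp]
    simp only [map_add, _root_.add_apply]
    ring
  have hyoung : 2 * (‖A‖ * ‖y‖ * ‖s‖) ≤ ε * ‖y‖ ^ 2 + ‖A‖ ^ 2 / ε * ‖s‖ ^ 2 := by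
    have hsq : ε * (‖y‖ - ‖A‖ / ε * ‖s‖) ^ 2 =
        ε * ‖y‖ ^ 2 + ‖A‖ ^ 2 / ε * ‖s‖ ^ 2 - 2 * (‖A‖ * ‖y‖ * ‖s‖) := by
      field_simp
      ring
    linarith [mul_nonneg hε.le (sq_nonneg (‖y‖ - ‖A‖ / ε * ‖s‖))]
  have hys := A.le_opNorm₂ (y, 0) (0, s)
  have hsy := A.le_opNorm₂ (0, s) (y, 0)
  have hss := A.le_opNorm₂ (0, s) (0, s)
  simp only [Prod.norm_def, norm_zero, norm_nonneg, sup_of_le_left, sup_of_le_right,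
    Real.norm_eq_abs] at hys hsy hss
  rw [hsplit]
  refine (abs_add_three _ _ _).trans ?_
  linarith [mul_right_comm ‖A‖ ‖y‖ ‖s‖, mul_assoc ‖A‖ ‖s‖ ‖s‖, pow_two ‖s‖]

variable {φ : (Fin n → ℝ) × ℝ → ℝ}

lemma sum_smul_single_prodMk_zero (y : Fin n → ℝ) :
    ∑ i, y i • ((Pi.single i 1 : Fin n → ℝ), (0 : ℝ)) = (y, 0) := by
  ext j
  · simp [Prod.fst_sum, Finset.sum_apply, Pi.single_apply]
  · simp [Prod.snd_sum]

lemma fderiv_slice_apply {F : Type*} [NormedAddCommGroup F] [NormedSpace ℝ F]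
    {ψ : (Fin n → ℝ) × ℝ → F} {z : (Fin n → ℝ) × ℝ} (hψ : DifferentiableAt ℝ ψ z)
    (y : Fin n → ℝ) : fderiv ℝ (fun x => ψ (x, z.2)) z.1 y = fderiv ℝ ψ z (y, 0) := by
  have hslice : HasFDerivAt (fun x => (x, z.2)) (.inl ℝ (Fin n → ℝ) ℝ) z.1 :=
    hasFDerivAt_prodMk_left z.1 z.2
  have hψ' : HasFDerivAt ψ (fderiv ℝ ψ z) (z.1, z.2) := hψ.hasFDerivAt
  exact DFunLike.congr_fun (hψ'.comp z.1 hslice).fderiv y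

lemma spaceGrad_dotProduct (hφ : Differentiable ℝ φ) (z : (Fin n → ℝ) × ℝ) (y : Fin n → ℝ) :
    spaceGrad φ z ⬝ᵥ y = fderiv ℝ φ z (y, 0) := by
  rw [← sum_smul_single_prodMk_zero y, map_sum, dotProduct]
  refine Finset.sum_congr rfl fun i _ => ?_
  rw [map_smul, spaceGrad, gradv, fderiv_slice_apply (hφ z), smul_eq_mul, mul_comm]

lemma timeDeriv_mul (hφ : Differentiable ℝ φ) (z : (Fin n → ℝ) × ℝ) (s : ℝ) :
    timeDeriv φ z * s = fderiv ℝ φ z (0, s) := by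
  have hslice : HasFDerivAt (fun t => (z.1, t)) (.inr ℝ (Fin n → ℝ) ℝ) z.2 :=
    hasFDerivAt_prodMk_right z.1 z.2
  have hφ' : HasFDerivAt φ (fderiv ℝ φ z) (z.1, z.2) := (hφ z).hasFDerivAt
  have hderiv : timeDeriv φ z = fderiv ℝ φ z (0, 1) := (hφ'.comp z.2 hslice).hasDerivAt.deriv
  rw [hderiv, mul_comm, ← smul_eq_mul, ← map_smul, Prod.smul_mk, smul_zero, smul_eq_mul, mul_one]

lemma spaceHess_apply (hφ : ContDiff ℝ 2 φ) (z : (Fin n → ℝ) × ℝ) (i j : Fin n) :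
    spaceHess φ z i j = fderiv ℝ (fderiv ℝ φ) z (Pi.single i 1, 0) (Pi.single j 1, 0) := by
  have hd : Differentiable ℝ (fderiv ℝ φ) :=
    (hφ.fderiv_right (m := 1) (by norm_num)).differentiable (by norm_num)
  have hslice : (fun x => fderiv ℝ (fun y => φ (y, z.2)) x (Pi.single j 1)) =
      fun x => fderiv ℝ φ (x, z.2) (Pi.single j 1, 0) := funext fun x =>
    fderiv_slice_apply (hφ.differentiable (by norm_num) (x, z.2)) _
  rw [spaceHess, hessv, Matrix.of_apply, hslice,
    fderiv_slice_apply (ψ := fun w => fderiv ℝ φ w (Pi.single j 1, 0))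
      ((hd z).clm_apply (differentiableAt_const _)), fderiv_clm_apply (hd z) (by fun_prop)]
  simp

lemma isHermitian_spaceHess (hφ : ContDiff ℝ 2 φ) (z : (Fin n → ℝ) × ℝ) :
    (spaceHess φ z).IsHermitian := by
  have hsymm : IsSymmSndFDerivAt ℝ φ z := hφ.contDiffAt.isSymmSndFDerivAt (by simp)
  ext i j
  rw [conjTranspose_apply, spaceHess_apply hφ, spaceHess_apply hφ, star_trivial]
  exact hsymm _ _

lemma dotProduct_spaceHess_mulVec (hφ : ContDiff ℝ 2 φ) (z : (Fin n → ℝ) × ℝ)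
    (y : Fin n → ℝ) : y ⬝ᵥ spaceHess φ z *ᵥ y = fderiv ℝ (fderiv ℝ φ) z (y, 0) (y, 0) := by
  rw [← sum_smul_single_prodMk_zero y]
  simp only [map_sum, map_smul, _root_.sum_apply, _root_.smul_apply, smul_eq_mul, dotProduct,
    mulVec, spaceHess_apply hφ, Finset.mul_sum]
  rw [Finset.sum_comm]
  exact Finset.sum_congr rfl fun i _ => Finset.sum_congr rfl fun j _ => by ring

lemma exists_eventually_abs_sub_testQuadratic_le (hφ : ContDiff ℝ 2 φ) (z₀ : (Fin n → ℝ) × ℝ)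
    {ε : ℝ} (hε : 0 < ε) : ∃ C : ℝ, ∀ᶠ z in 𝓝 z₀,
      |φ z - φ z₀ - testQuadratic (timeDeriv φ z₀) 0 (spaceGrad φ z₀) (spaceHess φ z₀) (z - z₀)| ≤
        ε / 2 * ((z - z₀).1 ⬝ᵥ (z - z₀).1) + C * (z - z₀).2 ^ 2 := by
  obtain ⟨C, hC⟩ := exists_forall_abs_sub_prodMk_zero_le (fderiv ℝ (fderiv ℝ φ) z₀) (half_pos hε)
  refine ⟨ε / 4 + C / 2, ?_⟩
  filter_upwards [(isLittleO_sub_sub_fderiv_sub_fderiv hφ z₀).def (by positivity : 0 < ε / 4)]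
    with z hz
  set w := z - z₀
  have hdiff := hφ.differentiable (by norm_num)
  have hlin : fderiv ℝ φ z₀ w = spaceGrad φ z₀ ⬝ᵥ w.1 + timeDeriv φ z₀ * w.2 := by
    rw [spaceGrad_dotProduct hdiff, timeDeriv_mul hdiff, ← map_add, Prod.mk_add_mk, add_zero,
      zero_add]
  have hquad := hC w
  have hnorm := mul_le_mul_of_nonneg_left (norm_sq_le_add_sq w) (by positivity : 0 ≤ ε / 4)
  have hnorm₁ := mul_le_mul_of_nonneg_left
    (pow_le_pow_left₀ (norm_nonneg _) (norm_le_eucNorm w.1) 2) (half_pos hε).le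
  rw [Real.norm_eq_abs, Real.norm_of_nonneg (sq_nonneg _), hlin, abs_le] at hz
  rw [← dotProduct_spaceHess_mulVec hφ, abs_le, Real.norm_eq_abs, sq_abs] at hquad
  rw [eucNorm_sq] at hnorm₁
  rw [testQuadratic, abs_le]
  constructor <;> linarith [hz.1, hz.2, hquad.1, hquad.2]

lemma hasSuperjet_of_contDiff (hφ : ContDiff ℝ 2 φ) (z₀ : (Fin n → ℝ) × ℝ) :
    HasSuperjet φ z₀ (timeDeriv φ z₀) (spaceGrad φ z₀) (spaceHess φ z₀) := fun ε hε => by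
  obtain ⟨C, hC⟩ := exists_eventually_abs_sub_testQuadratic_le hφ z₀ hε
  refine ⟨0 + C, hC.mono fun z hz => ?_⟩
  rw [testQuadratic_add_smul_one, testQuadratic_add_time]
  linarith [(abs_le.1 hz).2]

lemma hasSubjet_of_contDiff (hφ : ContDiff ℝ 2 φ) (z₀ : (Fin n → ℝ) × ℝ) :
    HasSubjet φ z₀ (timeDeriv φ z₀) (spaceGrad φ z₀) (spaceHess φ z₀) := fun ε hε => by
  obtain ⟨C, hC⟩ := exists_eventually_abs_sub_testQuadratic_le hφ z₀ hε
  refine ⟨0 + -C, hC.mono fun z hz => ?_⟩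
  rw [testQuadratic_sub_smul_one, testQuadratic_add_time]
  linarith [(abs_le.1 hz).1]

end Taylor

/-! ### The Perron class -/

section Obstacle

variable {c B : ℝ}

/-- The cone with vertex value `c + B` at the origin, which decays with slope one to the value `c`;
every competitor in Perron's method is required to lie below it. -/
def coneObstacle (c B : ℝ) (z : (Fin n → ℝ) × ℝ) : ℝ :=
  c + max 0 (B - eucNorm z.1 - z.2)

lemma le_coneObstacle (c B : ℝ) (z : (Fin n → ℝ) × ℝ) : c ≤ coneObstacle c B z :=
  le_add_of_nonneg_right (le_max_left _ _)

lemma coneObstacle_le (hB : 0 ≤ B) {z : (Fin n → ℝ) × ℝ} (hz : 0 ≤ z.2) :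
    coneObstacle c B z ≤ c + B :=
  add_le_add_right (max_le hB (by linarith [eucNorm_nonneg z.1])) c

lemma coneObstacle_eq {z : (Fin n → ℝ) × ℝ} (hz : B ≤ eucNorm z.1 + z.2) :
    coneObstacle c B z = c := by
  rw [coneObstacle, max_eq_left (by linarith), add_zero]

lemma continuous_coneObstacle : Continuous (coneObstacle (n := n) c B) := by
  have := continuous_eucNorm (n := n)
  unfold coneObstacle
  fun_prop

lemma eucNorm_le_eucNorm_add_add (x y : Fin n → ℝ) : eucNorm x ≤ eucNorm (x + y) + eucNorm y := by
  simpa only [eucNorm_eq_norm_toLp, WithLp.toLp_add] using norm_le_add_norm_add _ _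

lemma coneObstacle_add_le (z h : (Fin n → ℝ) × ℝ) :
    coneObstacle c B (z + h) ≤ coneObstacle c B z + (eucNorm h.1 + |h.2|) := by
  have hx := eucNorm_le_eucNorm_add_add z.1 h.1
  have ht := neg_abs_le h.2
  have hh : 0 ≤ eucNorm h.1 + |h.2| := add_nonneg (eucNorm_nonneg _) (abs_nonneg _)
  simp only [coneObstacle, Prod.fst_add, Prod.snd_add, add_assoc, add_le_add_iff_left]
  exact max_le (add_nonneg (le_max_left _ _) hh)
    (by linarith [le_max_right 0 (B - eucNorm z.1 - z.2)])

end Obstacle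

section InitialDatum

variable {g : (Fin n → ℝ) → ℝ} {c B : ℝ}

/-- `g` is initial data adapted to the obstacle `coneObstacle c B`. -/
structure InitialDatum (g : (Fin n → ℝ) → ℝ) (c B : ℝ) : Prop where
  uniformContinuous : UniformContinuous g
  le_coneObstacle : ∀ x, g x ≤ coneObstacle c B (x, 0)
  abs_sub_le : ∀ x, |g x - c| ≤ B

lemma InitialDatum.nonneg (hg : InitialDatum g c B) : 0 ≤ B :=
  (abs_nonneg _).trans (hg.abs_sub_le 0)

lemma isCompact_setOf_eucNorm_le (S : ℝ) : IsCompact {x : Fin n → ℝ | eucNorm x ≤ S} :=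
  (isCompact_closedBall (0 : Fin n → ℝ) S).of_isClosed_subset
    (isClosed_le continuous_eucNorm continuous_const) fun x hx =>
    mem_closedBall_zero_iff.2 ((norm_le_eucNorm x).trans hx)

lemma exists_initialDatum (hg : Continuous g) {S : ℝ} (hgc : ∀ x, S ≤ eucNorm x → g x = c) :
    ∃ B, InitialDatum g c B := by
  have hcpt := isCompact_setOf_eucNorm_le (n := n) S
  obtain ⟨M, hM⟩ := hcpt.bddAbove_image (f := fun x => |g x - c|) (by fun_prop)
  have hbd : ∀ x, |g x - c| ≤ max M 0 := fun x => by
    rcases le_total S (eucNorm x) with h | h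
    · simp [hgc x h]
    · exact (hM ⟨x, h, rfl⟩).trans (le_max_left _ _)
  refine ⟨max M 0 + |S|, hg.uniformContinuous_of_tendsto_cocompact
    (tendsto_const_nhds.congr' (f₁ := fun _ => c) ?_), fun x => ?_,
    fun x => (hbd x).trans (le_add_of_nonneg_right (abs_nonneg S))⟩
  · filter_upwards [hcpt.compl_mem_cocompact] with x hx
    exact (hgc x (le_of_not_ge hx)).symm
  · rcases le_total S (eucNorm x) with h | h
    · exact (hgc x h).le.trans (le_coneObstacle _ _ _)
    · have hmax := le_max_right 0 (max M 0 + |S| - eucNorm x - 0)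
      rw [coneObstacle]
      linarith [(abs_le.1 (hbd x)).2, le_abs_self S]

lemma eventually_forall_abs_add_sub_le (hg : UniformContinuous g) {ε : ℝ} (hε : 0 < ε) :
    ∀ᶠ y in 𝓝 0, ∀ x, |g (x + y) - g x| ≤ ε := by
  obtain ⟨δ, hδ, h⟩ := Metric.uniformContinuous_iff.1 hg ε hε
  filter_upwards [Metric.ball_mem_nhds 0 hδ] with y hy x
  have hdist : dist (x + y) x < δ := by simpa using hy
  exact (h hdist).le

lemma InitialDatum.exists_le_add_mul (hg : InitialDatum g c B) {ε : ℝ} (hε : 0 < ε) :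
    ∃ C : ℝ, 2 * B ≤ C ∧ ∀ x y, g y ≤ g x + ε + C * ((y - x) ⬝ᵥ (y - x)) := by
  obtain ⟨δ, hδ, hball⟩ := Metric.eventually_nhds_iff.1
    (eventually_forall_abs_add_sub_le hg.uniformContinuous hε)
  have hB := hg.nonneg
  refine ⟨2 * B + 2 * B / δ ^ 2, le_add_of_nonneg_right (by positivity), fun x y => ?_⟩
  have hq := dotProduct_self_nonneg_real (y - x)
  rcases lt_or_ge ‖y - x‖ δ with h | h
  · have hyx := (abs_le.1 (hball (by rwa [dist_zero_right]) x)).2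
    rw [add_sub_cancel] at hyx
    have : 0 ≤ (2 * B + 2 * B / δ ^ 2) * ((y - x) ⬝ᵥ (y - x)) := by positivity
    linarith
  · have hsq : δ ^ 2 ≤ (y - x) ⬝ᵥ (y - x) := by
      rw [← eucNorm_sq]
      exact pow_le_pow_left₀ hδ.le (h.trans (norm_le_eucNorm _)) 2
    have hmul : 2 * B ≤ 2 * B / δ ^ 2 * ((y - x) ⬝ᵥ (y - x)) :=
      (div_mul_cancel₀ (2 * B) (pow_pos hδ 2).ne').ge.trans
        (mul_le_mul_of_nonneg_left hsq (by positivity))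
    linarith [(abs_le.1 (hg.abs_sub_le x)).1, (abs_le.1 (hg.abs_sub_le y)).2, mul_nonneg hB hq]

end InitialDatum

section UpperBarrier

variable {K : Set (Fin n → ℝ)} {f : (Fin n → ℝ) → ℝ} {v : (Fin n → ℝ) × ℝ → ℝ}

lemma JetSubsolution.le_of_smul_one (hf : ConcaveCurvature K f) (hK : GoodCone K) {τ C : ℝ}
    {p : Fin n → ℝ} (hC : 0 ≤ C) (h : JetSubsolution K f τ p (C • 1)) : τ ≤ C := by
  rcases h with h | ⟨η, hη, h⟩
  · exact h.trans hC
  have hle : conjM (gammaE η) (C • 1) ≤ C • 1 := by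
    refine le_of_forall_dotProduct_mulVec_le (isHermitian_conjM η (isHermitian_smul_one C))
      (isHermitian_smul_one C) fun x => ?_
    simpa only [dotProduct_conjM_mulVec, smul_mulVec, one_mulVec, dotProduct_smul, smul_eq_mul]
      using mul_le_mul_of_nonneg_left (gammaE_dotProduct_self_le hη.1 x) hC
  refine le_of_forall_pos_le_add fun ε hε => (h ε hε).2.trans ?_
  refine (h ε hε).1.Fof_le_of_le_smul_one hf hK (by positivity) ?_
  rw [add_smul]
  exact add_le_add_left hle (ε • 1)

lemma IsSubsolutionAt.not_isLocalMax_sub_testQuadratic {z₀ z₁ : (Fin n → ℝ) × ℝ}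
    (hv : IsSubsolutionAt K f v z₁) (hf : ConcaveCurvature K f) (hK : GoodCone K) {τ C : ℝ}
    (hC : 0 ≤ C) (hτ : C < τ) :
    ¬ IsLocalMax (fun z => v z - testQuadratic τ 0 0 (C • 1) (z - z₀)) z₁ := fun hmax => by
  have hjet := hv _ _ _ (isHermitian_smul_one C)
    ((hasSuperjet_testQuadratic 0 (isHermitian_smul_one C) z₀ z₁).mono
      (hmax.mono fun z hz => by beta_reduce at hz; linarith))
  have := hjet.le_of_smul_one hf hK hC
  linarith

/-- Comparison on `{0 ≤ t} ∩ {|z - z₀| ≤ 1}` with a paraboloid moving upwards faster than the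
flow. -/
lemma le_add_testQuadratic_of_boundary_le (hf : ConcaveCurvature K f) (hK : GoodCone K)
    (hcont : Continuous v) (hv : ∀ z, IsSubsolutionAt K f v z) {z₀ : (Fin n → ℝ) × ℝ} {τ C a : ℝ}
    (hC : 0 ≤ C) (hτ : C < τ) (hbdry : ∀ z : (Fin n → ℝ) × ℝ, 0 ≤ z.2 → z.2 = 0 ∨ 1 ≤ dist z z₀ →
      v z ≤ a + testQuadratic τ 0 0 (C • 1) (z - z₀)) {z : (Fin n → ℝ) × ℝ} (hz : 0 ≤ z.2) :
    v z ≤ a + testQuadratic τ 0 0 (C • 1) (z - z₀) := by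
  rcases le_or_gt 1 (dist z z₀) with hfar | hnear
  · exact hbdry z hz (Or.inr hfar)
  have hφ : Continuous fun z => v z - testQuadratic τ 0 0 (C • 1) (z - z₀) :=
    hcont.sub (continuous_testQuadratic.comp (continuous_id.sub continuous_const))
  have hzmem : z ∈ Metric.closedBall z₀ 1 ∩ {z | 0 ≤ z.2} := ⟨hnear.le, hz⟩
  obtain ⟨z₁, ⟨-, hz₁t⟩, hmax⟩ := ((isCompact_closedBall z₀ 1).inter_right
    (isClosed_le continuous_const continuous_snd)).exists_isMaxOn ⟨z, hzmem⟩ hφ.continuousOn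
  have hle : v z - testQuadratic τ 0 0 (C • 1) (z - z₀) ≤
    v z₁ - testQuadratic τ 0 0 (C • 1) (z₁ - z₀) := hmax hzmem
  suffices hz₁ : z₁.2 = 0 ∨ 1 ≤ dist z₁ z₀ by linarith [hbdry z₁ hz₁t hz₁]
  by_contra! hint
  have hpos : ∀ᶠ z : (Fin n → ℝ) × ℝ in 𝓝 z₁, 0 < z.2 :=
    (continuous_snd.tendsto z₁).eventually_const_lt (lt_of_le_of_ne hz₁t hint.1.symm)
  exact (hv z₁).not_isLocalMax_sub_testQuadratic hf hK hC hτ (hmax.isLocalMax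
    (inter_mem (Metric.closedBall_mem_nhds_of_mem hint.2) (hpos.mono fun z hz => hz.le)))

end UpperBarrier

section PerronClass

variable {K : Set (Fin n → ℝ)} {f : (Fin n → ℝ) → ℝ} {g : (Fin n → ℝ) → ℝ} {c B : ℝ}
  {v : (Fin n → ℝ) × ℝ → ℝ}

/-- The competitors in Perron's method. They are defined and subsolutions for all times, and are
compared with the trivial subsolution `g x - t` for `t ≤ 0`, and with the obstacle for `t ≥ 0`. -/
structure IsCompetitor (K : Set (Fin n → ℝ)) (f g : (Fin n → ℝ) → ℝ) (c B : ℝ)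
    (v : (Fin n → ℝ) × ℝ → ℝ) : Prop where
  continuous : Continuous v
  isSubsolutionAt : ∀ z, IsSubsolutionAt K f v z
  le_of_nonpos : ∀ z : (Fin n → ℝ) × ℝ, z.2 ≤ 0 → v z ≤ g z.1 - z.2
  le_coneObstacle : ∀ z : (Fin n → ℝ) × ℝ, 0 ≤ z.2 → v z ≤ coneObstacle c B z

lemma InitialDatum.sub_time_le (hg : InitialDatum g c B) (z : (Fin n → ℝ) × ℝ) :
    g z.1 - z.2 ≤ coneObstacle c B z + (|z.2| - z.2) := by
  have hle := coneObstacle_add_le (c := c) (B := B) z (0, -z.2)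
  rw [show z + (0, -z.2) = (z.1, 0) by ext <;> simp, eucNorm_zero, abs_neg] at hle
  linarith [hg.le_coneObstacle z.1]

lemma isCompetitor_sub_time (hg : InitialDatum g c B) :
    IsCompetitor K f g c B fun z => g z.1 - z.2 where
  continuous := by
    have := hg.uniformContinuous.continuous
    fun_prop
  isSubsolutionAt z τ p M _ hsuper := by
    refine Or.inl ?_
    have hzero : HasSubjet (fun _ : (Fin n → ℝ) × ℝ => (0 : ℝ)) z 0 0 0 := by
      simpa [testQuadratic] using hasSubjet_testQuadratic (τ := 0) (p := 0) 0 isHermitian_zero z z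
    have hline := (hzero.sub hsuper).deriv_nonpos (d := (0, -1))
      (eventually_mem_nhdsWithin.mono fun r (hr : 0 < r) => by simpa using hr.le)
    simpa using hline
  le_of_nonpos _ _ := le_rfl
  le_coneObstacle z hz := by simpa [abs_of_nonneg hz] using hg.sub_time_le z

lemma IsCompetitor.le_add (hv : IsCompetitor K f g c B v) (hg : InitialDatum g c B)
    (z : (Fin n → ℝ) × ℝ) : v z ≤ coneObstacle c B z + (|z.2| - z.2) := by
  rcases le_total z.2 0 with hz | hz
  · exact (hv.le_of_nonpos z hz).trans (hg.sub_time_le z)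
  · simpa [abs_of_nonneg hz] using hv.le_coneObstacle z hz

lemma InitialDatum.exists_forall_le (hf : ConcaveCurvature K f) (hK : GoodCone K)
    (hg : InitialDatum g c B) {ε : ℝ} (hε : 0 < ε) : ∃ L : ℝ, 1 ≤ L ∧
      ∀ v, IsCompetitor K f g c B v → ∀ z, v z ≤ g z.1 + ε + L * |z.2| := by
  obtain ⟨C, hBC, hgC⟩ := hg.exists_le_add_mul hε
  have hC : 0 ≤ C := (mul_nonneg two_pos.le hg.nonneg).trans hBC
  refine ⟨2 * C + 1, by linarith, fun v hv ⟨x, t⟩ => ?_⟩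
  rcases le_total t 0 with ht | ht
  · have := hv.le_of_nonpos (x, t) ht
    rw [abs_of_nonpos ht]
    nlinarith
  have hle := le_add_testQuadratic_of_boundary_le hf hK hv.continuous hv.isSubsolutionAt
    (z₀ := (x, 0)) (τ := 2 * C + 1) (C := 2 * C) (a := g x + ε) (by positivity) (by linarith)
    (fun z hz hbdry => ?_) (z := (x, t)) ht
  · simpa [testQuadratic_smul_one, abs_of_nonneg ht] using hle
  have hq := dotProduct_self_nonneg_real (z.1 - x)
  simp only [testQuadratic_smul_one, Prod.fst_sub, Prod.snd_sub, sub_zero]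
  rcases hbdry with hz₀ | hfar
  · have hinit := hv.le_of_nonpos z hz₀.le
    rw [hz₀] at hinit ⊢
    linarith [hgC x z.1]
  · have hone : 1 ≤ z.2 + (z.1 - x) ⬝ᵥ (z.1 - x) := by
      rw [Prod.dist_eq, le_max_iff, dist_eq_norm, dist_zero_right, Real.norm_of_nonneg hz] at hfar
      rcases hfar with h | h
      · have := one_le_pow₀ (n := 2) (h.trans (norm_le_eucNorm _))
        rw [eucNorm_sq] at this
        linarith
      · linarith
    nlinarith [(hv.le_coneObstacle z hz).trans (coneObstacle_le hg.nonneg hz),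
      (abs_le.1 (hg.abs_sub_le x)).1]

lemma eventually_isCompetitor_comp_add_sub (hf : ConcaveCurvature K f) (hK : GoodCone K)
    (hg : InitialDatum g c B) {ε : ℝ} (hε : 0 < ε) :
    ∀ᶠ h in 𝓝 0, ∀ v, IsCompetitor K f g c B v →
      IsCompetitor K f g c B fun z => v (z + h) - ε := by
  obtain ⟨L, hL, hbarrier⟩ := hg.exists_forall_le hf hK (by positivity : 0 < ε / 4)
  have hspace : ∀ᶠ h : (Fin n → ℝ) × ℝ in 𝓝 0, ∀ x, |g (x + h.1) - g x| ≤ ε / 4 :=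
    (continuous_fst.tendsto (0 : (Fin n → ℝ) × ℝ)).eventually
      (eventually_forall_abs_add_sub_le hg.uniformContinuous (by positivity))
  have hsize : ∀ᶠ h : (Fin n → ℝ) × ℝ in 𝓝 0, eucNorm h.1 + L * |h.2| < ε / 4 := by
    have hcont : Continuous fun h : (Fin n → ℝ) × ℝ => eucNorm h.1 + L * |h.2| := by
      have := continuous_eucNorm (n := n)
      fun_prop
    exact (hcont.tendsto' 0 0 (by simp [eucNorm_zero])).eventually_lt_const (by positivity)
  filter_upwards [hspace, hsize] with h hgh hh v hv
  have hh₁ := eucNorm_nonneg h.1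
  have hh₂ : |h.2| ≤ L * |h.2| := le_mul_of_one_le_left (abs_nonneg _) hL
  refine ⟨by have := hv.continuous; fun_prop, fun z => (hv.isSubsolutionAt _).comp_add _,
    fun z hz => ?_, fun z hz => ?_⟩
  · have hgz := (abs_le.1 (hgh z.1)).2
    rcases le_total (z.2 + h.2) 0 with ht | ht
    · have := hv.le_of_nonpos (z + h) ht
      simp only [Prod.fst_add, Prod.snd_add] at this
      linarith [neg_abs_le h.2]
    · have := hbarrier v hv (z + h)
      have hLt := mul_nonneg (zero_le_one.trans hL) (neg_nonneg.2 hz)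
      have hLh := mul_le_mul_of_nonneg_left (le_abs_self h.2) (zero_le_one.trans hL)
      simp only [Prod.fst_add, Prod.snd_add, abs_of_nonneg ht, mul_add] at this
      linarith
  · have hle := hv.le_add hg (z + h)
    have hobst := coneObstacle_add_le (c := c) (B := B) z h
    have habs := abs_add_le z.2 h.2
    rw [abs_of_nonneg hz] at habs
    rw [Prod.snd_add] at hle
    linarith [neg_abs_le h.2]

end PerronClass

section PerronSup

variable {K : Set (Fin n → ℝ)} {f : (Fin n → ℝ) → ℝ} {g : (Fin n → ℝ) → ℝ} {c B : ℝ}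
  {v : (Fin n → ℝ) × ℝ → ℝ} {z : (Fin n → ℝ) × ℝ} {a : ℝ}

/-- Perron's solution, the upper envelope of all competitors. -/
def perronSup (K : Set (Fin n → ℝ)) (f g : (Fin n → ℝ) → ℝ) (c B : ℝ)
    (z : (Fin n → ℝ) × ℝ) : ℝ :=
  ⨆ v : {v // IsCompetitor K f g c B v}, v.1 z

lemma IsCompetitor.le_perronSup (hg : InitialDatum g c B) (hv : IsCompetitor K f g c B v)
    (z : (Fin n → ℝ) × ℝ) : v z ≤ perronSup K f g c B z :=
  le_ciSup (f := fun v : {v // IsCompetitor K f g c B v} => v.1 z)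
    ⟨_, forall_mem_range.2 fun v => v.2.le_add hg z⟩ ⟨v, hv⟩

lemma perronSup_le (hg : InitialDatum g c B) (h : ∀ v, IsCompetitor K f g c B v → v z ≤ a) :
    perronSup K f g c B z ≤ a :=
  have : Nonempty {v // IsCompetitor K f g c B v} := ⟨⟨_, isCompetitor_sub_time hg⟩⟩
  ciSup_le fun v => h v.1 v.2

lemma exists_isCompetitor_lt (hg : InitialDatum g c B) (h : a < perronSup K f g c B z) :
    ∃ v, IsCompetitor K f g c B v ∧ a < v z := by
  by_contra! hle
  exact h.not_ge (perronSup_le hg hle)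

lemma perronSup_eq_of_nonpos (hg : InitialDatum g c B) (hz : z.2 ≤ 0) :
    perronSup K f g c B z = g z.1 - z.2 :=
  (perronSup_le hg fun _ hv => hv.le_of_nonpos z hz).antisymm
    ((isCompetitor_sub_time hg).le_perronSup hg z)

lemma eventually_perronSup_add_le (hf : ConcaveCurvature K f) (hK : GoodCone K)
    (hg : InitialDatum g c B) {ε : ℝ} (hε : 0 < ε) :
    ∀ᶠ h in 𝓝 0, ∀ z, perronSup K f g c B (z + h) ≤ perronSup K f g c B z + ε := by
  filter_upwards [eventually_isCompetitor_comp_add_sub hf hK hg hε] with h hh z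
  exact perronSup_le hg fun v hv => sub_le_iff_le_add.1 ((hh v hv).le_perronSup hg z)

lemma continuous_perronSup (hf : ConcaveCurvature K f) (hK : GoodCone K)
    (hg : InitialDatum g c B) : Continuous (perronSup K f g c B) := by
  refine continuous_iff_continuousAt.2 fun z => Metric.continuousAt_iff'.2 fun ε hε => ?_
  have hle := eventually_perronSup_add_le hf hK hg (half_pos hε)
  have hge := (continuous_neg.tendsto' (0 : (Fin n → ℝ) × ℝ) 0 neg_zero).eventually hle
  rw [← map_add_left_nhds_zero z, eventually_map]
  filter_upwards [hle, hge] with h hle hge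
  have hge := hge (z + h)
  rw [add_neg_cancel_right] at hge
  rw [Real.dist_eq, abs_lt]
  constructor <;> linarith [hle z]

lemma isCompetitor_perronSup (hf : ConcaveCurvature K f) (hK : GoodCone K)
    (hg : InitialDatum g c B) : IsCompetitor K f g c B (perronSup K f g c B) where
  continuous := continuous_perronSup hf hK hg
  isSubsolutionAt _ := isSubsolutionAt_of_forall_lt_exists
    (𝒮 := {v | IsCompetitor K f g c B v}) hf hK (fun _ hv => hv.continuous)
    (fun _ hv => hv.le_perronSup hg) (fun _ ha => exists_isCompetitor_lt hg ha)
    (Eventually.of_forall fun z _ hv => hv.isSubsolutionAt z)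
  le_of_nonpos _ hz := (perronSup_eq_of_nonpos hg hz).le
  le_coneObstacle z hz := perronSup_le hg fun _ hv => hv.le_coneObstacle z hz

end PerronSup

/-! ### A lower barrier -/

section Projection

variable {K : Set (Fin n → ℝ)} {f : (Fin n → ℝ) → ℝ} {A : Matrix (Fin n) (Fin n) ℝ}
  {η : Fin n → ℝ} {k : ℝ}

lemma exists_smul_one_sub_single_le_eigenvalues [Nonempty (Fin n)] (hA : A.IsHermitian)
    (hA₀ : 0 ≤ A) (h : ∀ x, η ⬝ᵥ x = 0 → k * (x ⬝ᵥ x) ≤ x ⬝ᵥ A *ᵥ x) :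
    ∃ m, ∀ i, (k • ((fun _ => 1) - Pi.single m 1 : Fin n → ℝ)) i ≤ hA.eigenvalues i := by
  obtain ⟨m, hm⟩ := Finite.exists_max (eigenvalueRank (ι := Fin n))
  refine ⟨m, fun i => ?_⟩
  rcases eq_or_ne i m with rfl | him
  · simpa using le_eigenvalues_of_smul_one_le hA (by simpa using hA₀) i
  obtain ⟨W, -, hW, hdim⟩ := exists_orthogonal_submodule ⊤ η
  have hlt : eigenvalueRank i < eigenvalueRank m :=
    (hm i).lt_of_ne ((Equiv.injective _).ne him)
  have hrank : (eigenvalueRank i : ℕ) < Module.finrank ℝ W := by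
    rw [finrank_top, Module.finrank_fintype_fun_eq_card] at hdim
    have := (eigenvalueRank m).2
    omega
  simpa [him] using le_eigenvalues_of_lt_finrank hA i hrank fun y hy => h y (hW y hy)

lemma exists_eigIn_and_mul_le_Fof (hf : ConcaveCurvature K f) (hK : GoodCone K) (hk : 0 < k)
    (hA₀ : 0 ≤ A) (h : ∀ x, η ⬝ᵥ x = 0 → k * (x ⬝ᵥ x) ≤ x ⬝ᵥ A *ᵥ x) :
    ∃ m, eigIn K A ∧ k * f ((fun _ => 1) - Pi.single m 1) ≤ Fof f A := by
  have : Nonempty (Fin n) := ⟨⟨0, two_pos.trans_le (hf.two_le hK)⟩⟩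
  have hA : A.IsHermitian := isHermitian_of_le isHermitian_zero hA₀
  obtain ⟨m, hm⟩ := exists_smul_one_sub_single_le_eigenvalues hA hA₀ h
  have hmem := hK.one_sub_single_mem m
  have hkmem := hK.smul_mem hk hmem
  refine ⟨m, (eigIn_iff hA).2 (hK.mono hkmem hm), ?_⟩
  rw [Fof_eq hA, ← hf.map_smul k hk _ hmem]
  exact hf.mono hK hkmem hm

lemma IsDirection.smul {p : Fin n → ℝ} (h : IsDirection p η) (hk : 0 ≤ k) :
    IsDirection (k • p) η := by
  refine ⟨h.1, ?_⟩
  rw [eucNorm_eq_norm_toLp, WithLp.toLp_smul, norm_smul, Real.norm_of_nonneg hk,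
    ← eucNorm_eq_norm_toLp, mul_smul, h.2]

lemma IsDirection.dotProduct_gammaE_mulVec {p : Fin n → ℝ} (h : IsDirection p η)
    (x : Fin n → ℝ) : p ⬝ᵥ gammaE η *ᵥ x = 0 := by
  have hunit : eucNorm p * (1 - η ⬝ᵥ η) = 0 := by
    have hsq : eucNorm p * (eucNorm p * (η ⬝ᵥ η)) = eucNorm p ^ 2 := by
      simpa [eucNorm_sq] using congrArg (fun q => q ⬝ᵥ q) h.2
    refine pow_eq_zero_iff two_ne_zero |>.1 ?_
    linear_combination (η ⬝ᵥ η - 1) * hsq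
  have hp : p ⬝ᵥ x = eucNorm p * (η ⬝ᵥ x) := by rw [← smul_eq_mul, ← smul_dotProduct, h.2]
  have hη : p ⬝ᵥ η = eucNorm p * (η ⬝ᵥ η) := by rw [← smul_eq_mul, ← smul_dotProduct, h.2]
  rw [gammaE_mulVec, dotProduct_sub, dotProduct_smul, hp, hη, smul_eq_mul]
  linear_combination (η ⬝ᵥ x) * hunit

lemma isHermitian_smul_one_sub_vecMulVec (k b : ℝ) (x : Fin n → ℝ) :
    (k • 1 - b • vecMulVec x x : Matrix (Fin n) (Fin n) ℝ).IsHermitian :=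
  (isHermitian_smul_one k).sub (by simp [IsHermitian])

/-- The second-order part `b • x xᵀ` is normal to the level set, so the flow does not see it. -/
lemma jetSubsolution_smul_one_sub_vecMulVec (hf : ConcaveCurvature K f) (hK : GoodCone K) {a : ℝ}
    (ha : ∀ i, a ≤ f ((fun _ => 1) - Pi.single i 1)) (hk : 0 ≤ k) (b : ℝ) (x : Fin n → ℝ) :
    JetSubsolution K f (k * a) (k • x) (k • 1 - b • vecMulVec x x) := by
  rcases hk.eq_or_lt with rfl | hk
  · exact Or.inl (by simp)
  obtain ⟨η, hη⟩ := exists_isDirection x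
  set A := conjM (gammaE η) (k • 1 - b • vecMulVec x x) with hAdef
  have hquad : ∀ y, y ⬝ᵥ A *ᵥ y = k * ((gammaE η *ᵥ y) ⬝ᵥ (gammaE η *ᵥ y)) := fun y => by
    rw [hAdef, dotProduct_conjM_mulVec, sub_mulVec, smul_mulVec, smul_mulVec, one_mulVec,
      vecMulVec_mulVec, hη.dotProduct_gammaE_mulVec, dotProduct_sub, dotProduct_smul]
    simp
  have hA : A.IsHermitian := isHermitian_conjM η (isHermitian_smul_one_sub_vecMulVec k b x)
  have hA₀ : 0 ≤ A := le_of_forall_dotProduct_mulVec_le isHermitian_zero hA fun y => by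
    rw [zero_mulVec, dotProduct_zero, hquad]
    exact mul_nonneg hk.le (dotProduct_self_nonneg_real _)
  obtain ⟨m, hmem, hle⟩ := exists_eigIn_and_mul_le_Fof (η := η) hf hK hk hA₀ fun y hy => by
    rw [hquad, gammaE_mulVec, hy, zero_smul, sub_zero]
  refine Or.inr ⟨η, hη.smul hk.le, fun ε hε => ?_⟩
  have hmono := le_add_smul_one A hε.le
  exact ⟨hmem.mono hK hmono, ((mul_le_mul_of_nonneg_left (ha m) hk.le).trans hle).trans
    (hmem.Fof_mono hf hK hmono)⟩

end Projection

section BallBarrier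

variable {c Q R a : ℝ}

/-- A function whose sublevel sets are balls shrinking by the law `|x|² = const - 2 a t`; it is
constant after the extinction time. -/
def ballBarrier (c Q R a : ℝ) (z : (Fin n → ℝ) × ℝ) : ℝ :=
  c - Q * max (R - z.1 ⬝ᵥ z.1 - 2 * a * z.2) 0 ^ 2

lemma dotProduct_sq_le (x y : Fin n → ℝ) : (x ⬝ᵥ y) ^ 2 ≤ (x ⬝ᵥ x) * (y ⬝ᵥ y) := by
  simpa only [dotProduct, pow_two] using Finset.sum_mul_sq_le_sq_mul_sq Finset.univ x y

lemma exists_eventually_sq_le (a : ℝ) (x : Fin n → ℝ) {ε : ℝ} (hε : 0 < ε) :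
    ∃ C, ∀ᶠ w : (Fin n → ℝ) × ℝ in 𝓝 0, (2 * (x ⬝ᵥ w.1) + w.1 ⬝ᵥ w.1 + 2 * a * w.2) ^ 2 ≤
      4 * (x ⬝ᵥ w.1) ^ 2 + ε * (w.1 ⬝ᵥ w.1) + C * w.2 ^ 2 := by
  set δ := ε / (2 * (x ⬝ᵥ x + 1)) with hδdef
  have hx := dotProduct_self_nonneg_real x
  have hδ : 0 < δ := by positivity
  have hsmall : ∀ᶠ w : (Fin n → ℝ) × ℝ in 𝓝 0,
      4 * (x ⬝ᵥ w.1) + w.1 ⬝ᵥ w.1 + 4 * a * w.2 < ε / 2 := by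
    have hcont : Continuous fun w : (Fin n → ℝ) × ℝ =>
      4 * (x ⬝ᵥ w.1) + w.1 ⬝ᵥ w.1 + 4 * a * w.2 := by fun_prop
    exact (hcont.tendsto' 0 0 (by simp)).eventually_lt_const (half_pos hε)
  refine ⟨4 * a ^ 2 + 16 * a ^ 2 / δ, hsmall.mono fun w hw => ?_⟩
  have hq := dotProduct_self_nonneg_real w.1
  have hcubic := mul_le_mul_of_nonneg_right hw.le hq
  have hcross : 8 * a * (x ⬝ᵥ w.1) * w.2 ≤ δ * (x ⬝ᵥ w.1) ^ 2 + 16 * a ^ 2 / δ * w.2 ^ 2 := by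
    have := two_mul_le_add_sq (δ * (x ⬝ᵥ w.1)) (4 * a * w.2)
    rw [← mul_le_mul_iff_right₀ hδ]
    field_simp
    linarith
  have hcs : δ * (x ⬝ᵥ w.1) ^ 2 ≤ ε / 2 * (w.1 ⬝ᵥ w.1) := by
    calc δ * (x ⬝ᵥ w.1) ^ 2 ≤ δ * ((x ⬝ᵥ x + 1) * (w.1 ⬝ᵥ w.1)) :=
          mul_le_mul_of_nonneg_left (by linarith [dotProduct_sq_le x w.1]) hδ.le
      _ = ε / 2 * (w.1 ⬝ᵥ w.1) := by rw [hδdef]; field_simp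
  linarith

lemma hasSubjet_ballBarrier (hQ : 0 < Q) (z₀ : (Fin n → ℝ) × ℝ) {s : ℝ}
    (hs : s = max (R - z₀.1 ⬝ᵥ z₀.1 - 2 * a * z₀.2) 0) :
    HasSubjet (ballBarrier c Q R a) z₀ (4 * Q * s * a) ((4 * Q * s) • z₀.1)
      ((4 * Q * s) • 1 - (8 * Q) • vecMulVec z₀.1 z₀.1) := by
  intro ε hε
  obtain ⟨C, hC⟩ := exists_eventually_sq_le a z₀.1 (by positivity : 0 < ε / (2 * Q))
  have hshift : Tendsto (fun z => z - z₀) (𝓝 z₀) (𝓝 0) :=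
    (continuous_id.sub continuous_const).tendsto' _ _ (sub_self z₀)
  refine ⟨-(Q * C), (hshift.eventually hC).mono fun z hz => ?_⟩
  obtain ⟨w, rfl⟩ : ∃ w, z = z₀ + w := ⟨z - z₀, by abel⟩
  rw [add_sub_cancel_left] at hz ⊢
  set P := 2 * (z₀.1 ⬝ᵥ w.1) + w.1 ⬝ᵥ w.1 + 2 * a * w.2 with hP
  have hbase : R - (z₀ + w).1 ⬝ᵥ (z₀ + w).1 - 2 * a * (z₀ + w).2 =
      R - z₀.1 ⬝ᵥ z₀.1 - 2 * a * z₀.2 - P := by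
    simp only [Prod.fst_add, Prod.snd_add, add_dotProduct, dotProduct_add,
      dotProduct_comm w.1 z₀.1, hP]
    ring
  have hsq : max (R - (z₀ + w).1 ⬝ᵥ (z₀ + w).1 - 2 * a * (z₀ + w).2) 0 ^ 2 ≤ (s - P) ^ 2 := by
    rw [hbase]
    refine sq_le_sq.2 ((abs_of_nonneg (le_max_right _ _)).trans_le (max_le ?_ (abs_nonneg _)))
    exact (sub_le_sub_right (hs ▸ le_max_left _ _) P).trans (le_abs_self _)
  have hmul := mul_le_mul_of_nonneg_left hz hQ.le
  have hcancel : Q * (ε / (2 * Q)) = ε / 2 := by field_simp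
  have htest : testQuadratic (4 * Q * s * a) (-(Q * C)) ((4 * Q * s) • z₀.1)
      ((4 * Q * s) • 1 - (8 * Q) • vecMulVec z₀.1 z₀.1 - ε • 1) w =
      2 * Q * s * P - 4 * Q * (z₀.1 ⬝ᵥ w.1) ^ 2 - ε / 2 * (w.1 ⬝ᵥ w.1) - Q * C * w.2 ^ 2 := by
    simp only [testQuadratic, sub_mulVec, smul_mulVec, one_mulVec, vecMulVec_mulVec,
      dotProduct_sub, dotProduct_smul, smul_dotProduct, op_smul_eq_smul, smul_eq_mul,
      dotProduct_comm w.1 z₀.1, hP]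
    ring
  rw [htest, ballBarrier, ballBarrier, ← hs]
  linear_combination hmul + Q * hsq + hcancel * (w.1 ⬝ᵥ w.1)

end BallBarrier

section LowerBarrier

variable {K : Set (Fin n → ℝ)} {f g : (Fin n → ℝ) → ℝ} {c B Q R a : ℝ}

lemma ConcaveCurvature.exists_pos_le_one_sub_single (hf : ConcaveCurvature K f)
    (hK : GoodCone K) : ∃ a, 0 < a ∧ ∀ i, a ≤ f ((fun _ => 1) - Pi.single i 1) := by
  have : Nonempty (Fin n) := ⟨⟨0, two_pos.trans_le (hf.two_le hK)⟩⟩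
  obtain ⟨i₀, hi₀⟩ := Finite.exists_min fun i => f ((fun _ => 1) - Pi.single i 1)
  exact ⟨_, hf.pos _ (hK.one_sub_single_mem i₀), hi₀⟩

lemma ballBarrier_le (hQ : 0 ≤ Q) (z : (Fin n → ℝ) × ℝ) : ballBarrier c Q R a z ≤ c :=
  sub_le_self _ (mul_nonneg hQ (sq_nonneg _))

lemma isCompetitor_ballBarrier (hf : ConcaveCurvature K f) (hK : GoodCone K)
    (hg : InitialDatum g c B) {S : ℝ} (hgc : ∀ x, S ≤ eucNorm x → g x = c) (ha : 0 < a)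
    (hfa : ∀ i, a ≤ f ((fun _ => 1) - Pi.single i 1)) :
    IsCompetitor K f g c B (ballBarrier c (B + 1) (S ^ 2 + 1) a) where
  continuous := by
    unfold ballBarrier
    fun_prop
  isSubsolutionAt z := by
    have hB := hg.nonneg
    exact (hasSubjet_ballBarrier (by positivity) z rfl).isSubsolutionAt hf hK
      (isHermitian_smul_one_sub_vecMulVec _ _ _)
      (jetSubsolution_smul_one_sub_vecMulVec hf hK hfa (by positivity) _ _)
  le_of_nonpos z hz := by
    have hB := hg.nonneg
    rcases le_total S (eucNorm z.1) with h | h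
    · rw [hgc z.1 h]
      linarith [ballBarrier_le (c := c) (R := S ^ 2 + 1) (a := a) (by positivity : 0 ≤ B + 1) z]
    · have hx : z.1 ⬝ᵥ z.1 ≤ S ^ 2 := by
        rw [← eucNorm_sq]
        exact pow_le_pow_left₀ (eucNorm_nonneg _) h 2
      have hone : 1 ≤ max (S ^ 2 + 1 - z.1 ⬝ᵥ z.1 - 2 * a * z.2) 0 ^ 2 :=
        one_le_pow₀ (le_max_of_le_left (by nlinarith))
      have hmul := mul_le_mul_of_nonneg_left hone (by positivity : 0 ≤ B + 1)
      rw [ballBarrier]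
      linarith [(abs_le.1 (hg.abs_sub_le z.1)).1]
  le_coneObstacle z _ := (ballBarrier_le (by linarith [hg.nonneg]) z).trans
    (le_coneObstacle c B z)

end LowerBarrier

/-! ### The supersolution property -/

section Bump

variable {K : Set (Fin n → ℝ)} {f g : (Fin n → ℝ) → ℝ} {c B : ℝ} {v w : (Fin n → ℝ) × ℝ → ℝ}
  {z₀ : (Fin n → ℝ) × ℝ} {τ : ℝ} {p : Fin n → ℝ} {M : Matrix (Fin n) (Fin n) ℝ}

/-- `v` is a viscosity supersolution of the level-set flow at `z₀`. As in the definition of weak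
solutions, only the subjets at which some direction is admissible are tested. -/
def IsSupersolutionAt (K : Set (Fin n → ℝ)) (f : (Fin n → ℝ) → ℝ) (v : (Fin n → ℝ) × ℝ → ℝ)
    (z₀ : (Fin n → ℝ) × ℝ) : Prop :=
  ∀ τ p M, M.IsHermitian → HasSubjet v z₀ τ p M →
    (∃ η, IsDirection p η ∧ eigIn K (conjM (gammaE η) M)) →
    ∃ η, IsDirection p η ∧ Fof f (conjM (gammaE η) M) ≤ τ

lemma HasSubjet.exists_isSubsolutionAt_le_sub_dist_sq (h : HasSubjet v z₀ τ p M)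
    (hf : ConcaveCurvature K f) (hK : GoodCone K) (hM : M.IsHermitian)
    (hex : ∃ η, IsDirection p η ∧ eigIn K (conjM (gammaE η) M))
    (hlt : ∀ η, IsDirection p η → τ < Fof f (conjM (gammaE η) M)) :
    ∃ δ : ℝ, 0 < δ ∧ ∃ q : (Fin n → ℝ) × ℝ → ℝ, Continuous q ∧ q z₀ = v z₀ ∧
      (∀ᶠ z in 𝓝 z₀, q z ≤ v z - δ * dist z z₀ ^ 2) ∧ ∀ᶠ z in 𝓝 z₀, IsSubsolutionAt K f q z := by
  have hshrink : Tendsto (fun δ : ℝ => (τ, p, M - δ • 1)) (𝓝[>] 0) (𝓝 (τ, p, M)) := by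
    have hcont : Continuous fun δ : ℝ => (τ, p, M - δ • 1) := by fun_prop
    exact (hcont.tendsto' 0 _ (by simp)).mono_left nhdsWithin_le_nhds
  obtain ⟨δ, hjets, hδ⟩ := ((hshrink.eventually
    (eventually_jetSubsolution hf hK hM hex hlt).eventually_nhds).and self_mem_nhdsWithin).exists
  have hδ : 0 < δ := hδ
  have hN : (M - δ • 1).IsHermitian := hM.sub (isHermitian_smul_one δ)
  obtain ⟨C, hC⟩ := h (δ / 2) (half_pos hδ)
  set T := testQuadratic τ (C + -(δ / 4)) p (M - δ • 1) with hT
  refine ⟨δ / 4, by positivity, fun z => v z₀ + T (z - z₀), ?_, ?_, hC.mono fun z hz => ?_, ?_⟩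
  · exact continuous_const.add
      (continuous_testQuadratic.comp (continuous_id.sub continuous_const))
  · beta_reduce
    rw [sub_self, hT, testQuadratic_zero, add_zero]
  · have hdist := mul_le_mul_of_nonneg_left (norm_sq_le_add_sq (z - z₀))
      (by positivity : 0 ≤ δ / 4)
    rw [testQuadratic_sub_smul_one] at hz
    beta_reduce
    rw [hT, testQuadratic_add_time, testQuadratic_sub_smul_one, dist_eq_norm]
    linarith
  · have hjet : Continuous fun z : (Fin n → ℝ) × ℝ => (τ + 2 * (C + -(δ / 4)) * (z - z₀).2,
        p + (M - δ • 1) *ᵥ (z - z₀).1, M - δ • 1) := by fun_prop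
    filter_upwards [(hjet.tendsto' z₀ _ (by simp)).eventually hjets] with z hz
    exact ((hasSubjet_testQuadratic _ hN z₀ z).isSubsolutionAt hf hK hN (hz hN)).of_le
      (Eventually.of_forall fun y => (add_sub_add_left_eq_sub _ _ _).ge)

lemma IsSubsolutionAt.congr (h : IsSubsolutionAt K f v z₀) (hvw : v =ᶠ[𝓝 z₀] w) :
    IsSubsolutionAt K f w z₀ :=
  h.of_le (hvw.mono fun z hz => by rw [hz, hvw.eq_of_nhds])

lemma IsCompetitor.piecewise_sup {q : (Fin n → ℝ) × ℝ → ℝ} {U C : Set ((Fin n → ℝ) × ℝ)}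
    (hv : IsCompetitor K f g c B v) (hU : IsOpen U) (hC : IsClosed C) (hCU : C ⊆ U)
    (hq : Continuous q) (hqsub : ∀ z ∈ U, IsSubsolutionAt K f q z)
    (hqv : ∀ z ∈ U \ C, q z ≤ v z) (hpos : ∀ z ∈ U, 0 < z.2)
    (hqobst : ∀ z ∈ U, q z ≤ coneObstacle c B z) :
    IsCompetitor K f g c B (U.piecewise (v ⊔ q) v) := by
  have hin : ∀ z ∈ U, v ⊔ q =ᶠ[𝓝 z] U.piecewise (v ⊔ q) v := fun z hz =>
    mem_of_superset (hU.mem_nhds hz) fun y hy => (piecewise_eq_of_mem U _ _ hy).symm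
  have hout : ∀ z ∉ U, v =ᶠ[𝓝 z] U.piecewise (v ⊔ q) v := fun z hz => by
    filter_upwards [hC.isOpen_compl.mem_nhds fun h => hz (hCU h)] with y hy
    by_cases hyU : y ∈ U
    · rw [piecewise_eq_of_mem _ _ _ hyU, Pi.sup_apply, sup_of_le_left (hqv y ⟨hyU, hy⟩)]
    · rw [piecewise_eq_of_notMem _ _ _ hyU]
  refine ⟨continuous_iff_continuousAt.2 fun z => ?_, fun z => ?_, fun z hz => ?_, fun z hz => ?_⟩
  · by_cases hz : z ∈ U
    · exact (hv.continuous.sup hq).continuousAt.congr (hin z hz)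
    · exact hv.continuous.continuousAt.congr (hout z hz)
  · by_cases hz : z ∈ U
    · exact ((hv.isSubsolutionAt z).sup (hqsub z hz)).congr (hin z hz)
    · exact (hv.isSubsolutionAt z).congr (hout z hz)
  · rw [piecewise_eq_of_notMem _ _ _ fun h => (hpos z h).not_ge hz]
    exact hv.le_of_nonpos z hz
  · by_cases hzU : z ∈ U
    · rw [piecewise_eq_of_mem _ _ _ hzU]
      exact sup_le (hv.le_coneObstacle z hz) (hqobst z hzU)
    · rw [piecewise_eq_of_notMem _ _ _ hzU]
      exact hv.le_coneObstacle z hz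

lemma IsCompetitor.exists_lt_of_hasSubjet (hv : IsCompetitor K f g c B v)
    (hf : ConcaveCurvature K f) (hK : GoodCone K) (hz₀ : 0 < z₀.2)
    (hobst : v z₀ < coneObstacle c B z₀) (h : HasSubjet v z₀ τ p M) (hM : M.IsHermitian)
    (hex : ∃ η, IsDirection p η ∧ eigIn K (conjM (gammaE η) M))
    (hlt : ∀ η, IsDirection p η → τ < Fof f (conjM (gammaE η) M)) :
    ∃ w, IsCompetitor K f g c B w ∧ v z₀ < w z₀ := by
  obtain ⟨δ, hδ, q, hq, hqz₀, hqv, hqsub⟩ :=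
    h.exists_isSubsolutionAt_le_sub_dist_sq hf hK hM hex hlt
  obtain ⟨m, hvm, hmobst⟩ := exists_between hobst
  have hroom : ∀ᶠ z in 𝓝 z₀, q z + (m - v z₀) < coneObstacle c B z :=
    ((hq.add continuous_const).tendsto' z₀ m (by simp [hqz₀])).eventually_lt
      (continuous_coneObstacle.tendsto z₀) hmobst
  obtain ⟨ρ, hρ, hball⟩ := Metric.eventually_nhds_iff_ball.1
    (hqv.and (hqsub.and (hroom.and ((continuous_snd.tendsto z₀).eventually_const_lt hz₀))))
  obtain ⟨κ, hκ, hκlt⟩ := exists_between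
    (lt_min (sub_pos.2 hvm) (mul_pos hδ (pow_pos (half_pos hρ) 2)))
  obtain ⟨hκm, hκδ⟩ := lt_min_iff.1 hκlt
  refine ⟨_, hv.piecewise_sup (q := fun z => q z + κ) Metric.isOpen_ball
    (Metric.isClosed_closedBall (x := z₀) (ε := ρ / 2))
    (Metric.closedBall_subset_ball (half_lt_self hρ)) (hq.add continuous_const)
    (fun z hz => (hball z hz).2.1.of_le
      (Eventually.of_forall fun y => (add_sub_add_right_eq_sub _ _ _).ge))
    (fun z ⟨hz, hzC⟩ => ?_) (fun z hz => (hball z hz).2.2.2)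
    fun z hz => by linarith [(hball z hz).2.2.1], ?_⟩
  · have hfar : ρ / 2 < dist z z₀ := not_le.1 hzC
    have hmul := mul_le_mul_of_nonneg_left (pow_le_pow_left₀ (half_pos hρ).le hfar.le 2) hδ.le
    linarith [(hball z hz).1]
  · rw [piecewise_eq_of_mem _ _ _ (Metric.mem_ball_self hρ), Pi.sup_apply, hqz₀]
    exact lt_sup_of_lt_right (lt_add_of_pos_right _ hκ)

end Bump

section Contact

variable {K : Set (Fin n → ℝ)} {f : (Fin n → ℝ) → ℝ} {c B : ℝ} {v : (Fin n → ℝ) × ℝ → ℝ}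
  {z₀ : (Fin n → ℝ) × ℝ} {τ : ℝ} {p : Fin n → ℝ} {M : Matrix (Fin n) (Fin n) ℝ}

lemma eucNorm_le_eucNorm_add_of_dotProduct_nonneg {x y : Fin n → ℝ} (h : 0 ≤ x ⬝ᵥ y) :
    eucNorm x ≤ eucNorm (x + y) := by
  refine Real.sqrt_le_sqrt ?_
  rw [sqNorm_eq_dotProduct, sqNorm_eq_dotProduct, add_dotProduct, dotProduct_add, dotProduct_add,
    dotProduct_comm y x]
  linarith [dotProduct_self_nonneg_real y]

lemma coneObstacle_add_le_of_dotProduct_nonneg (z : (Fin n → ℝ) × ℝ) {e : Fin n → ℝ}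
    (he : 0 ≤ z.1 ⬝ᵥ e) : coneObstacle c B (z + (e, 0)) ≤ coneObstacle c B z := by
  have := eucNorm_le_eucNorm_add_of_dotProduct_nonneg he
  simp only [coneObstacle, Prod.fst_add, Prod.snd_add, add_zero]
  gcongr

/-- Along any line of space through a contact point, the obstacle decreases in one direction. -/
lemma HasSubjet.dotProduct_mulVec_nonpos_of_eq_coneObstacle (h : HasSubjet v z₀ τ p M)
    (hz₀ : v z₀ = coneObstacle c B z₀)
    (hle : ∀ x, v (x, z₀.2) ≤ coneObstacle c B (x, z₀.2)) {e : Fin n → ℝ} (hp : p ⬝ᵥ e = 0) :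
    e ⬝ᵥ M *ᵥ e ≤ 0 := by
  wlog he : 0 ≤ z₀.1 ⬝ᵥ e generalizing e
  · have := this (e := -e) (by rw [dotProduct_neg, hp, neg_zero])
      (by rw [dotProduct_neg]; linarith)
    rwa [mulVec_neg, neg_dotProduct_neg] at this
  refine h.dotProduct_mulVec_nonpos hp (eventually_mem_nhdsWithin.mono fun r (hr : 0 < r) => ?_)
  have hre : 0 ≤ z₀.1 ⬝ᵥ (r • e) := by
    rw [dotProduct_smul]
    exact smul_nonneg hr.le he
  have hobst := coneObstacle_add_le_of_dotProduct_nonneg (c := c) (B := B) z₀ hre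
  have hv := hle (z₀.1 + r • e)
  rw [Prod.smul_mk, smul_zero, hz₀]
  have heq : z₀ + (r • e, 0) = (z₀.1 + r • e, z₀.2) := by ext <;> simp
  rw [heq] at hobst ⊢
  exact hv.trans hobst

lemma not_eigIn_conjM_of_eq_coneObstacle (hf : ConcaveCurvature K f) (hK : GoodCone K)
    (h : HasSubjet v z₀ τ p M) (hM : M.IsHermitian) (hz₀ : v z₀ = coneObstacle c B z₀)
    (hle : ∀ x, v (x, z₀.2) ≤ coneObstacle c B (x, z₀.2)) {η : Fin n → ℝ}
    (hη : IsDirection p η) : ¬ eigIn K (conjM (gammaE η) M) := by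
  refine not_eigIn_of_nonpos hf hK
    (le_of_forall_dotProduct_mulVec_le (isHermitian_conjM η hM) isHermitian_zero fun x => ?_)
  rw [dotProduct_conjM_mulVec, zero_mulVec, dotProduct_zero]
  exact h.dotProduct_mulVec_nonpos_of_eq_coneObstacle hz₀ hle (hη.dotProduct_gammaE_mulVec x)

end Contact

section Supersolution

variable {K : Set (Fin n → ℝ)} {f g : (Fin n → ℝ) → ℝ} {c B : ℝ} {z₀ : (Fin n → ℝ) × ℝ}

lemma isSupersolutionAt_perronSup (hf : ConcaveCurvature K f) (hK : GoodCone K)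
    (hg : InitialDatum g c B) (hz₀ : 0 < z₀.2) :
    IsSupersolutionAt K f (perronSup K f g c B) z₀ := by
  intro τ p M hM h hex
  have hu := isCompetitor_perronSup hf hK hg
  by_contra! hlt
  rcases (hu.le_coneObstacle z₀ hz₀.le).lt_or_eq with hobst | hobst
  · obtain ⟨w, hw, hlt⟩ := hu.exists_lt_of_hasSubjet hf hK hz₀ hobst h hM hex hlt
    exact hlt.not_ge (hw.le_perronSup hg z₀)
  · obtain ⟨η, hη, hηK⟩ := hex
    exact not_eigIn_conjM_of_eq_coneObstacle hf hK h hM hobst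
      (fun x => hu.le_coneObstacle (x, z₀.2) hz₀.le) hη hηK

end Supersolution

/-! ### Weak solutions -/

section WeakSolutions

variable {K : Set (Fin n → ℝ)} {f : (Fin n → ℝ) → ℝ} {φ u : (Fin n → ℝ) × ℝ → ℝ}
  {D : Set ((Fin n → ℝ) × ℝ)} {z₀ : (Fin n → ℝ) × ℝ}

lemma weakSub_of_forall_isSubsolutionAt (hf : ConcaveCurvature K f) (hK : GoodCone K)
    (hu : ContinuousOn u (HalfSpace n)) (hbd : ∃ M : ℝ, ∀ z ∈ HalfSpace n, |u z| ≤ M)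
    (h : ∀ z : (Fin n → ℝ) × ℝ, 0 < z.2 → IsSubsolutionAt K f u z) : WeakSub K f u := by
  refine ⟨hu, hbd, fun D _ hD φ hφ z₀ hz₀ hmax => ?_⟩
  have hφ2 : ContDiff ℝ 2 φ := hφ.1.of_le (by norm_cast)
  have hM := isHermitian_spaceHess hφ2 z₀
  have hsuper : HasSuperjet u z₀ (timeDeriv φ z₀) (spaceGrad φ z₀) (spaceHess φ z₀) :=
    (hasSuperjet_of_contDiff hφ2 z₀).mono (hmax.mono fun z hz => by linarith)
  have hjet := h z₀ (hD hz₀) _ _ _ hM hsuper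
  refine ⟨fun hp => hjet.le_Fof_gammaP hf hK hp ((hφ.2 z₀ hz₀).1 hp).1, fun hp => ?_⟩
  obtain ⟨η, hη, hηK, -⟩ := (hφ.2 z₀ hz₀).2 hp
  rw [hp] at hjet
  exact hjet.exists_le_Fof_gammaE hf hK hM ⟨η, hη, hηK⟩

lemma Admissible.exists_isDirection (hφ : Admissible K f φ D) (hz₀ : z₀ ∈ D) :
    ∃ η, IsDirection (spaceGrad φ z₀) η ∧ eigIn K (conjM (gammaE η) (spaceHess φ z₀)) := by
  by_cases hp : spaceGrad φ z₀ = 0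
  · obtain ⟨η, hη, hηK, -⟩ := (hφ.2 z₀ hz₀).2 hp
    exact ⟨η, hp ▸ isDirection_zero.2 hη, hηK⟩
  · obtain ⟨η, hη⟩ := _root_.exists_isDirection (spaceGrad φ z₀)
    exact ⟨η, hη, gammaP_eq_gammaE hp hη.2 ▸ ((hφ.2 z₀ hz₀).1 hp).1⟩

lemma weakSuper_of_forall_isSupersolutionAt (hu : ContinuousOn u (HalfSpace n))
    (hbd : ∃ M : ℝ, ∀ z ∈ HalfSpace n, |u z| ≤ M)
    (h : ∀ z : (Fin n → ℝ) × ℝ, 0 < z.2 → IsSupersolutionAt K f u z) : WeakSuper K f u := by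
  refine ⟨hu, hbd, fun D _ hD φ hφ z₀ hz₀ hmin => ?_⟩
  have hφ2 : ContDiff ℝ 2 φ := hφ.1.of_le (by norm_cast)
  have hsub : HasSubjet u z₀ (timeDeriv φ z₀) (spaceGrad φ z₀) (spaceHess φ z₀) :=
    (hasSubjet_of_contDiff hφ2 z₀).mono (hmin.mono fun z hz => by linarith)
  obtain ⟨η, hη, hle⟩ := h z₀ (hD hz₀) _ _ _ (isHermitian_spaceHess hφ2 z₀) hsub
    (hφ.exists_isDirection hz₀)
  refine ⟨fun hp => ?_, fun hp => ?_⟩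
  · rwa [gammaP_eq_gammaE hp hη.2]
  · exact ⟨η, isDirection_zero.1 (hp ▸ hη), hle⟩

end WeakSolutions

section Bounds

variable {K : Set (Fin n → ℝ)} {f g : (Fin n → ℝ) → ℝ} {c B Q R a S : ℝ}
  {z : (Fin n → ℝ) × ℝ}

lemma le_ballBarrier (hQ : 0 ≤ Q) (hR : 0 ≤ R) (ha : 0 ≤ a) (hz : 0 ≤ z.2) :
    c - Q * R ^ 2 ≤ ballBarrier c Q R a z := by
  have hmax : max (R - z.1 ⬝ᵥ z.1 - 2 * a * z.2) 0 ≤ R :=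
    max_le (by linarith [dotProduct_self_nonneg_real z.1, mul_nonneg ha hz]) hR
  unfold ballBarrier
  gcongr

lemma ballBarrier_eq (hR : 1 ≤ R) (ha : 0 < a) (hz : 0 ≤ z.2)
    (hfar : R + R / (2 * a) ≤ eucNorm z.1 + z.2) : ballBarrier c Q R a z = c := by
  suffices hle : R - z.1 ⬝ᵥ z.1 - 2 * a * z.2 ≤ 0 by
    rw [ballBarrier, max_eq_right hle, zero_pow two_ne_zero, mul_zero, sub_zero]
  rw [← eucNorm_sq]
  rcases le_total R (eucNorm z.1) with h | h
  · nlinarith [mul_nonneg ha.le hz]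
  · have hlate : R / (2 * a) ≤ z.2 := by linarith
    rw [div_le_iff₀' (by positivity)] at hlate
    linarith [sq_nonneg (eucNorm z.1)]

lemma exists_forall_abs_perronSup_le (hf : ConcaveCurvature K f) (hK : GoodCone K)
    (hg : InitialDatum g c B) (hgc : ∀ x, S ≤ eucNorm x → g x = c) :
    ∃ M : ℝ, ∀ z ∈ HalfSpace n, |perronSup K f g c B z| ≤ M := by
  obtain ⟨a, ha, hfa⟩ := hf.exists_pos_le_one_sub_single hK
  have hB := hg.nonneg
  refine ⟨max |c - (B + 1) * (S ^ 2 + 1) ^ 2| |c + B|, fun z (hz : 0 ≤ z.2) => ?_⟩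
  refine abs_le_max_abs_abs ?_ ?_
  · exact (le_ballBarrier (by positivity) (by positivity) ha.le hz).trans
      ((isCompetitor_ballBarrier hf hK hg hgc ha hfa).le_perronSup hg z)
  · exact ((isCompetitor_perronSup hf hK hg).le_coneObstacle z hz).trans (coneObstacle_le hB hz)

lemma exists_forall_perronSup_eq (hf : ConcaveCurvature K f) (hK : GoodCone K)
    (hg : InitialDatum g c B) (hgc : ∀ x, S ≤ eucNorm x → g x = c) :
    ∃ R : ℝ, 0 < R ∧ ∀ z ∈ HalfSpace n, R ≤ eucNorm z.1 + z.2 → perronSup K f g c B z = c := by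
  obtain ⟨a, ha, hfa⟩ := hf.exists_pos_le_one_sub_single hK
  have hB := hg.nonneg
  have hS : 1 ≤ S ^ 2 + 1 := le_add_of_nonneg_left (sq_nonneg S)
  have hpos : 0 < (S ^ 2 + 1) + (S ^ 2 + 1) / (2 * a) := by positivity
  refine ⟨B + ((S ^ 2 + 1) + (S ^ 2 + 1) / (2 * a)), by positivity, fun z (hz : 0 ≤ z.2) hR => ?_⟩
  apply le_antisymm
  · exact ((isCompetitor_perronSup hf hK hg).le_coneObstacle z hz).trans_eq
      (coneObstacle_eq (by linarith))
  · exact (ballBarrier_eq hS ha hz (by linarith)).ge.trans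
      ((isCompetitor_ballBarrier hf hK hg hgc ha hfa).le_perronSup hg z)

end Bounds

theorem stmt5_general {K : Set (Fin n → ℝ)} {f : (Fin n → ℝ) → ℝ}
    (hK : GoodCone K) (hf : ConcaveCurvature K f) {g : (Fin n → ℝ) → ℝ} (hg : Continuous g)
    {S c : ℝ} (hgc : ∀ x : Fin n → ℝ, S ≤ eucNorm x → g x = c) :
    ∃ u : (Fin n → ℝ) × ℝ → ℝ, WeakSol K f u ∧ (∀ x : Fin n → ℝ, u (x, 0) = g x) ∧
      ∃ R c' : ℝ, 0 < R ∧ ∀ z ∈ HalfSpace n, R ≤ eucNorm z.1 + z.2 → u z = c' := by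
  obtain ⟨B, hB⟩ := exists_initialDatum hg hgc
  have hu := isCompetitor_perronSup hf hK hB
  have hbd := exists_forall_abs_perronSup_le hf hK hB hgc
  obtain ⟨R, hR, hconst⟩ := exists_forall_perronSup_eq hf hK hB hgc
  refine ⟨perronSup K f g c B, ⟨?_, ?_⟩, fun x => ?_, R, c, hR, hconst⟩
  · exact weakSub_of_forall_isSubsolutionAt hf hK hu.continuous.continuousOn hbd
      fun z _ => hu.isSubsolutionAt z
  · exact weakSuper_of_forall_isSupersolutionAt hu.continuous.continuousOn hbd
      fun z hz => isSupersolutionAt_perronSup hf hK hB hz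
  · rw [perronSup_eq_of_nonpos hB le_rfl, sub_zero]

/-- **existence of weak solutions.** If `g` is continuous and constant
outside a ball (`g ≡ c` on `{|x| ≥ S}`), then there is a weak solution `u` of the level-set
flow with `u(·,0) = g`, and `u` is constant on `{|x| + t ≥ R}` for some `R > 0`. -/
theorem stmt5 {n : ℕ} (hn : 2 ≤ n) (K : Set (Fin n → ℝ)) (f : (Fin n → ℝ) → ℝ)
    (hK : GoodCone K) (hf : GoodF K f)
    (g : (Fin n → ℝ) → ℝ) (hg : Continuous g)
    (S c : ℝ) (hS : 0 < S) (hgc : ∀ x : Fin n → ℝ, S ≤ eucNorm x → g x = c) :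
    ∃ u : (Fin n → ℝ) × ℝ → ℝ, WeakSol K f u ∧ (∀ x : Fin n → ℝ, u (x, 0) = g x) ∧
      ∃ R c' : ℝ, 0 < R ∧ ∀ z ∈ HalfSpace n, R ≤ eucNorm z.1 + z.2 → u z = c' :=
  stmt5_general hK hf.concaveCurvature hg hgc
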